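/- arXiv:1304.6216 — 4 statements merged into one kernel-verified Lean document; each statement's English description precedes it below -/
import Mathlib

section
/- Let k be a field, let A be a commutative Hopf algebra over k, and suppose A is the union of a directed (under inclusion) family (A_i)_{i ∈ I} of finitely generated sub-Hopf-algebras, where I is a directed index poset. Let B be a torsor algebra for A. Then there exist a directed poset Ω whose cardinality equals the cardinality of I, and a monotone family (B_ω)_{ω ∈ Ω} of nonzero finitely generated k-subalgebras of B (i.e. B_{ω₁} ⊆ B_{ω₂} whenever ω₁ ≤ ω₂), such that B = ⋃_{ω ∈ Ω} B_ω and, for every ω₁ ≤ ω₂ in Ω, the inclusion B_{ω₁} ⊆ B_{ω₂} makes B_{ω₂} a faithfully flat B_{ω₁}-algebra. -/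
open TensorProduct

/-- `S` is a sub-Hopf-algebra of `A`: it is closed under the comultiplication (its image lies in
`S ⊗ S` inside `A ⊗ A`) and under the antipode. -/
def Subalgebra.IsHopfSub (k : Type*) {A : Type*} [CommSemiring k] [Semiring A]
    [HopfAlgebra k A] (S : Subalgebra k A) : Prop :=
  (∀ a ∈ S, Coalgebra.comul (R := k) a ∈
      LinearMap.range (TensorProduct.map S.val.toLinearMap S.val.toLinearMap)) ∧
  (∀ a ∈ S, HopfAlgebra.antipode (R := k) a ∈ S)

/-- `B`, with coaction `ρ`, is a torsor algebra for the Hopf algebra `A`: `B` is a nonzero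
comodule algebra over `A` and the Galois map `B ⊗ B → B ⊗ A`, `b ⊗ b' ↦ (b ⊗ 1) * ρ b'`,
is bijective. -/
structure IsTorsorAlgebra (k : Type*) [CommSemiring k] (A : Type*) [CommSemiring A]
    [HopfAlgebra k A] (B : Type*) [CommSemiring B] [Algebra k B]
    (ρ : B →ₐ[k] B ⊗[k] A) : Prop where
  nontrivial : Nontrivial B
  counit_coaction : ∀ b : B,
    (TensorProduct.rid k B) ((TensorProduct.map LinearMap.id (Coalgebra.counit (R := k))) (ρ b)) = b
  coassoc : ∀ b : B,
    (TensorProduct.assoc k B A A) ((TensorProduct.map ρ.toLinearMap LinearMap.id) (ρ b)) =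
      (TensorProduct.map LinearMap.id (Coalgebra.comul (R := k))) (ρ b)
  galois_bijective : Function.Bijective
    (Algebra.TensorProduct.lift (Algebra.TensorProduct.includeLeft : B →ₐ[k] B ⊗[k] A) ρ
      (fun _ _ => Commute.all _ _))

/-!
For a sub-Hopf-algebra `C ⊆ A` let `B_C` be the set of `b : B` with `ρ b ∈ B ⊗ C`. The Galois
isomorphism `B ⊗ B ≃ B ⊗ A` carries `B ⊗ B_C` onto `B ⊗ C`. Since `B` is faithfully flat over `k`,
finite generation of `B_C` descends from that of `C`, and faithful flatness of `B_C → B` descends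
from that of `C → A`. Each `b` lies in some `B_{A_i}`, because `ρ b` is a finite sum of pure
tensors.

That `A` is faithfully flat over `C` reduces to flatness of `(C, A)`-Hopf modules, applied to `A`
and to `A / C`. A Hopf module is a union of finitely generated ones. For a finitely generated `M`
and a maximal ideal `p`, coordinates on the fibre `M / pM`, translated by the coaction, pull back
along the orbit map `C → (C / p) ⊗ A` to a spanning family of coordinates on `M`. Comparing them
with generators of `M` near the identity bounds the fibre rank at `p` by the rank at the identity.
Since the orbit map of the identity is injective, minimal generators of `M` near `p` are therefore
independent, so `M` is locally free.
-/

section SemilinearSpanning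

variable {C S T M ι κ : Type*} [CommRing C] [CommRing S] [CommRing T] [AddCommGroup M] [Module C M]
  {τ : C →+* S}

/-- The semilinear map obtained from `ψ : M → S^ι` by extending scalars along `h : S → T`. -/
def extendCoordinates (ψ : M →ₛₗ[τ] (ι → S)) (h : S →+* T) : M →ₛₗ[h.comp τ] (ι → T) where
  toFun m i := h (ψ m i)
  map_add' m n := by ext i; simp
  map_smul' c m := by ext i; simp

theorem span_range_extendCoordinates [Finite ι] {ψ : M →ₛₗ[τ] (ι → S)}
    (hψ : Submodule.span S (Set.range ψ) = ⊤) (h : S →+* T) :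
    Submodule.span T (Set.range (extendCoordinates ψ h)) = ⊤ := by
  classical
  let hι : (ι → S) →ₛₗ[h] (ι → T) := extendCoordinates .id h
  have mem_span : ∀ x, hι x ∈ Submodule.span T (Set.range (extendCoordinates ψ h)) := fun x ↦ by
    have hle : Submodule.span S (Set.range ψ) ≤
        (Submodule.span T (Set.range (extendCoordinates ψ h))).comap hι :=
      Submodule.span_le.mpr <| by
        rintro _ ⟨m, rfl⟩
        exact Submodule.subset_span ⟨m, rfl⟩
    exact hle (hψ ▸ Submodule.mem_top)
  rw [eq_top_iff, ← (Pi.basisFun T ι).span_eq, Submodule.span_le]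
  rintro _ ⟨i, rfl⟩
  have hbasis : Pi.basisFun T ι i = hι (Pi.single i 1) := by
    ext j
    simp [hι, extendCoordinates, Pi.single_apply, apply_ite h]
  exact hbasis ▸ mem_span _

variable {N : Type*} [AddCommGroup N] [Module S N]

theorem span_range_comp_eq_top_of_isUnit {ψ : M →ₛₗ[τ] N}
    (hψ : Submodule.span S (Set.range ψ) = ⊤) {g : κ → M} {c : C} (hu : IsUnit (τ c))
    (hg : ∀ x, c • x ∈ Submodule.span C (Set.range g)) :
    Submodule.span S (Set.range (ψ ∘ g)) = ⊤ := by
  have hle : Submodule.span C (Set.range g) ≤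
      (Submodule.span S (Set.range (ψ ∘ g))).comap ψ := by
    rw [Submodule.span_le]
    rintro _ ⟨j, rfl⟩
    exact Submodule.subset_span ⟨j, rfl⟩
  rw [eq_top_iff, ← hψ, Submodule.span_le]
  rintro _ ⟨m, rfl⟩
  have hm : τ c • ψ m ∈ Submodule.span S (Set.range (ψ ∘ g)) := by
    simpa only [Submodule.mem_comap, map_smulₛₗ] using hle (hg m)
  exact (Submodule.smul_mem_iff_of_isUnit _ hu).mp hm

variable {ψ : M →ₛₗ[τ] (ι → S)} {g : κ → M} {c : C}

theorem span_range_extendCoordinates_away_comp [Finite ι]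
    (hψ : Submodule.span S (Set.range ψ) = ⊤)
    (hg : ∀ x, c • x ∈ Submodule.span C (Set.range g)) :
    Submodule.span (Localization.Away (τ c)) (Set.range
      (extendCoordinates ψ (algebraMap S (Localization.Away (τ c))) ∘ g)) = ⊤ :=
  span_range_comp_eq_top_of_isUnit (span_range_extendCoordinates hψ _)
    (IsLocalization.Away.algebraMap_isUnit (τ c)) hg

variable [Fintype ι] [Fintype κ]

theorem card_le_card_of_smul_mem_span (hψ : Submodule.span S (Set.range ψ) = ⊤)
    (hg : ∀ x, c • x ∈ Submodule.span C (Set.range g)) (hc : ¬ IsNilpotent (τ c)) :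
    Fintype.card ι ≤ Fintype.card κ := by
  have : Nontrivial (Localization.Away (τ c)) := by
    rw [← not_subsingleton_iff_nontrivial,
      IsLocalization.subsingleton_iff (M := Submonoid.powers (τ c))]
    exact hc
  have hspan := span_range_extendCoordinates_away_comp hψ hg
  have h := finrank_range_le_card (R := Localization.Away (τ c))
    (extendCoordinates ψ (algebraMap S (Localization.Away (τ c))) ∘ g)
  rwa [Set.finrank, hspan, finrank_top, Module.finrank_fintype_fun_eq_card] at h

theorem exists_pow_smul_eq_zero_of_sum_smul_eq_zero (hτ : Function.Injective τ)
    (hψ : Submodule.span S (Set.range ψ) = ⊤)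
    (hg : ∀ x, c • x ∈ Submodule.span C (Set.range g))
    (hcard : Fintype.card κ ≤ Fintype.card ι) {x : κ → C} (hx : ∑ j, x j • g j = 0) (j : κ) :
    ∃ n : ℕ, c ^ n * x j = 0 := by
  let T := Localization.Away (τ c)
  suffices hzero : algebraMap S T (τ (x j)) = 0 by
    obtain ⟨⟨_, n, rfl⟩, hn⟩ := (IsLocalization.map_eq_zero_iff (.powers (τ c)) _ _).mp hzero
    exact ⟨n, hτ (by simpa using hn)⟩
  cases subsingleton_or_nontrivial T
  · exact Subsingleton.elim _ _
  have hli : LinearIndependent T (extendCoordinates ψ (algebraMap S T) ∘ g) :=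
    linearIndependent_of_top_le_span_of_card_le_finrank
      (span_range_extendCoordinates_away_comp hψ hg).ge (by simpa using hcard)
  have hsum : ∑ j, algebraMap S T (τ (x j)) • extendCoordinates ψ (algebraMap S T) (g j) = 0 := by
    simpa using congrArg (extendCoordinates ψ (algebraMap S T)) hx
  exact Fintype.linearIndependent_iff.mp hli _ hsum j

end SemilinearSpanning

section Flatness

variable {C M : Type*} [CommRing C] [AddCommGroup M] [Module C M]

theorem bijective_isLocalizedModule_map {N M' N' : Type*} [AddCommGroup N] [Module C N]
    [AddCommGroup M'] [Module C M'] [AddCommGroup N'] [Module C N'] (S : Submonoid C)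
    (f : M →ₗ[C] M') [IsLocalizedModule S f] (f' : N →ₗ[C] N') [IsLocalizedModule S f']
    {g : M →ₗ[C] N} (hker : ∀ x, g x = 0 → ∃ s ∈ S, s • x = 0)
    (hrange : ∀ y, ∃ s ∈ S, s • y ∈ LinearMap.range g) :
    Function.Bijective (IsLocalizedModule.map S f f' g) := by
  refine ⟨(injective_iff_map_eq_zero _).mpr fun z hz ↦ ?_, fun z ↦ ?_⟩
  · obtain ⟨⟨x, s⟩, rfl⟩ := IsLocalizedModule.mk'_surjective S f z
    simp only [Function.uncurry_apply_pair, IsLocalizedModule.map_mk',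
      IsLocalizedModule.mk'_eq_zero, IsLocalizedModule.eq_zero_iff S] at hz ⊢
    obtain ⟨t, ht⟩ := hz
    obtain ⟨u, hu, hux⟩ := hker (t • x) (by simpa only [Submonoid.smul_def, map_smul] using ht)
    exact ⟨⟨u, hu⟩ * t, by rw [mul_smul]; exact hux⟩
  · obtain ⟨⟨y, s⟩, rfl⟩ := IsLocalizedModule.mk'_surjective S f' z
    obtain ⟨u, hu, x, hx⟩ := hrange y
    refine ⟨IsLocalizedModule.mk' f x (⟨u, hu⟩ * s), ?_⟩
    rw [IsLocalizedModule.map_mk', hx]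
    exact IsLocalizedModule.mk'_cancel_left (f := f') y ⟨u, hu⟩ s

theorem flat_of_locally_free
    (h : ∀ p : Ideal C, p.IsMaximal → ∃ (n : ℕ) (g : Fin n → M), ∃ c ∉ p,
      (∀ x, c • x ∈ Submodule.span C (Set.range g)) ∧
      ∀ x : Fin n → C, ∑ j, x j • g j = 0 → ∀ j, ∃ m : ℕ, c ^ m * x j = 0) :
    Module.Flat C M := by
  refine Module.flat_of_localized_maximal _ fun p hp ↦ ?_
  obtain ⟨n, g, c, hc, hspan, hrel⟩ := h p hp
  have hker : ∀ x, Fintype.linearCombination C g x = 0 → ∃ s ∈ p.primeCompl, s • x = 0 := by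
    intro x hx
    choose m hm using hrel x hx
    refine ⟨c ^ ∑ j, m j, p.primeCompl.pow_mem hc _, funext fun j ↦ ?_⟩
    obtain ⟨d, hd⟩ := pow_dvd_pow c (Finset.single_le_sum_of_canonicallyOrdered
      (f := m) (Finset.mem_univ j))
    rw [Pi.smul_apply, smul_eq_mul, hd, mul_right_comm, hm, zero_mul, Pi.zero_apply]
  have hrange : ∀ y, ∃ s ∈ p.primeCompl, s • y ∈ LinearMap.range (Fintype.linearCombination C g) :=
    fun y ↦ ⟨c, hc, by simpa only [Fintype.range_linearCombination] using hspan y⟩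
  have : Module.Flat C (LocalizedModule p.primeCompl (Fin n → C)) :=
    Module.Flat.trans C (Localization p.primeCompl) _
  exact Module.Flat.of_linearEquiv (LinearEquiv.ofBijective _ <| bijective_isLocalizedModule_map
    p.primeCompl (LocalizedModule.mkLinearMap p.primeCompl (Fin n → C))
    (LocalizedModule.mkLinearMap p.primeCompl M) hker hrange).symm

theorem flat_of_forall_finset_exists_flat_submodule
    (h : ∀ s : Finset M, ∃ N : Submodule C M, (s : Set M) ⊆ N ∧ Module.Flat C N) :
    Module.Flat C M := by
  classical
  refine Module.Flat.of_forall_isTrivialRelation fun {l f x} hfx ↦ ?_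
  obtain ⟨N, hN, hflat⟩ := h (Finset.univ.image x)
  let x' : Fin l → N := fun i ↦ ⟨x i, hN (by simp)⟩
  have hfx' : ∑ i, f i • x' i = 0 := Subtype.ext (by simpa [x'] using hfx)
  obtain ⟨n, a, y, hxy, ha⟩ := Module.Flat.isTrivialRelation_of_sum_smul_eq_zero hfx'
  exact ⟨n, a, fun j ↦ y j, fun i ↦ by simpa [x'] using congrArg Subtype.val (hxy i), ha⟩

theorem exists_sum_smul_eq_of_flat_quotient {ι : Type*} [Fintype ι] {N : Submodule C M}
    [Module.Flat C (M ⧸ N)] {f : ι → C} {x : ι → M} (hfx : ∑ i, f i • x i ∈ N) :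
    ∃ z : ι → N, ∑ i, f i • (z i : M) = ∑ i, f i • x i := by
  have hrel : ∑ i, f i • N.mkQ (x i) = 0 := by
    simp_rw [← map_smul, ← map_sum]
    exact (Submodule.Quotient.mk_eq_zero N).mpr hfx
  obtain ⟨n, r, y, hxy, hr⟩ := Module.Flat.isTrivialRelation_of_sum_smul_eq_zero hrel
  choose Y hY using fun j ↦ N.mkQ_surjective (y j)
  have hmem : ∀ i, x i - ∑ j, r i j • Y j ∈ N := fun i ↦ by
    rw [← Submodule.Quotient.mk_eq_zero, ← Submodule.mkQ_apply]
    simp only [map_sub, map_sum, map_smul, hY, hxy, sub_self]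
  refine ⟨fun i ↦ ⟨_, hmem i⟩, ?_⟩
  calc ∑ i, f i • (x i - ∑ j, r i j • Y j)
      = ∑ i, f i • x i - ∑ j, (∑ i, f i * r i j) • Y j := by
        simp only [smul_sub, Finset.smul_sum, smul_smul, Finset.sum_sub_distrib, Finset.sum_smul]
        rw [Finset.sum_comm]
    _ = ∑ i, f i • x i := by simp [hr]

theorem smul_top_inf_le_smul_of_flat_quotient (I : Ideal C) (N : Submodule C M)
    [Module.Flat C (M ⧸ N)] : I • ⊤ ⊓ N ≤ I • N := by
  rintro x ⟨hxI, hxN⟩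
  rw [SetLike.mem_coe, ← Submodule.span_univ, ← Set.range_id,
    Submodule.mem_ideal_smul_span_iff_exists_sum] at hxI
  obtain ⟨a, ha, rfl⟩ := hxI
  rw [Finsupp.sum, ← Finset.sum_coe_sort] at hxN ⊢
  obtain ⟨z, hz⟩ := exists_sum_smul_eq_of_flat_quotient hxN
  rw [← hz]
  exact Submodule.sum_mem _ fun i _ ↦ Submodule.smul_mem_smul (ha i) (z i).2

theorem faithfullyFlat_of_flat_quotient_range {A : Type*} [CommRing A] [Algebra C A]
    (hinj : Function.Injective (algebraMap C A)) [Module.Flat C A]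
    [Module.Flat C (A ⧸ LinearMap.range (Algebra.linearMap C A))] :
    Module.FaithfullyFlat C A where
  submodule_ne_top p hp htop := by
    have hone_mem : (1 : A) ∈ p • (⊤ : Submodule C A) := by rw [htop]; trivial
    have hone : (1 : A) ∈ p • LinearMap.range (Algebra.linearMap C A) :=
      smul_top_inf_le_smul_of_flat_quotient p _ ⟨hone_mem, 1, map_one (algebraMap C A)⟩
    rw [LinearMap.range_eq_map, ← Submodule.map_smul'', smul_eq_mul, Ideal.mul_top] at hone
    obtain ⟨c, hcp, hc⟩ := hone
    have hc_one : c = 1 := hinj (hc.trans (map_one (algebraMap C A)).symm)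
    exact hp.ne_top ((p.eq_top_iff_one).mpr (hc_one ▸ hcp))

/-- The dimension of the fibre `M / pM` of `M` over the residue ring `C / p`. -/
noncomputable def fiberRank (M : Type*) [AddCommGroup M] [Module C M] (p : Ideal C) : ℕ :=
  Module.finrank (C ⧸ p) (M ⧸ p • (⊤ : Submodule C M))

variable [Module.Finite C M]

variable (M) in
theorem exists_surjective_fiberRank (p : Ideal C) [p.IsMaximal] :
    ∃ φ : M →ₗ[C] (Fin (fiberRank M p) → C ⧸ p), Function.Surjective φ := by
  let := Ideal.Quotient.field p
  let b := Module.finBasis (C ⧸ p) (M ⧸ p • (⊤ : Submodule C M))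
  exact ⟨(b.equivFun.toLinearMap.restrictScalars C).comp (Submodule.mkQ _),
    b.equivFun.surjective.comp (Submodule.mkQ_surjective _)⟩

variable (M) in
theorem exists_smul_mem_span_fiberRank (p : Ideal C) [p.IsMaximal] :
    ∃ g : Fin (fiberRank M p) → M, ∃ c ∉ p, ∀ x, c • x ∈ Submodule.span C (Set.range g) := by
  let := Ideal.Quotient.field p
  let b := Module.finBasis (C ⧸ p) (M ⧸ p • (⊤ : Submodule C M))
  choose g hg using fun j ↦ Submodule.mkQ_surjective _ (b j)
  have hsup : ⊤ ≤ Submodule.span C (Set.range g) ⊔ p • (⊤ : Submodule C M) := by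
    have hmap : (Submodule.span C (Set.range g)).map (Submodule.mkQ (p • ⊤)) = ⊤ := by
      rw [Submodule.map_span, ← Set.range_comp, show Submodule.mkQ _ ∘ g = b from funext hg,
        ← Submodule.restrictScalars_span C (C ⧸ p) Ideal.Quotient.mk_surjective, b.span_eq,
        Submodule.restrictScalars_top]
    rw [sup_comm, (Submodule.map_mkQ_eq_top _ _).mp hmap]
  obtain ⟨c, hc, hcM⟩ := Submodule.exists_sub_one_mem_and_smul_le_of_fg_of_le_sup
    Module.Finite.fg_top le_top hsup
  refine ⟨g, c, fun hcp ↦ ?_, fun x ↦ hcM (Submodule.smul_mem_pointwise_smul _ _ _ trivial)⟩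
  exact Ideal.IsPrime.one_notMem ‹p.IsMaximal›.isPrime (by simpa using p.sub_mem hcp hc)

variable {S : Ideal C → Type*} [∀ p, CommRing (S p)] {τ : ∀ p, C →+* S p}

theorem flat_of_forall_exists_span_range_eq_top
    (hψ : ∀ (p : Ideal C) [p.IsMaximal], ∃ ψ : M →ₛₗ[τ p] (Fin (fiberRank M p) → S p),
      Submodule.span (S p) (Set.range ψ) = ⊤)
    {p₀ : Ideal C} [p₀.IsMaximal] (hinj : Function.Injective (τ p₀))
    (hnil : ∀ (p : Ideal C) [p.IsMaximal], ∀ c ∉ p₀, ¬ IsNilpotent (τ p c)) :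
    Module.Flat C M := by
  have rank_le : ∀ (p : Ideal C) [p.IsMaximal], fiberRank M p ≤ fiberRank M p₀ := fun p _ ↦ by
    obtain ⟨ψ, hψp⟩ := hψ p
    obtain ⟨g, c, hc, hg⟩ := exists_smul_mem_span_fiberRank M p₀
    simpa using card_le_card_of_smul_mem_span hψp hg (hnil p c hc)
  refine flat_of_locally_free fun q hq ↦ ?_
  obtain ⟨ψ, hψ₀⟩ := hψ p₀
  obtain ⟨g, c, hc, hg⟩ := exists_smul_mem_span_fiberRank M q
  exact ⟨_, g, c, hc, hg, fun x hx ↦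
    exists_pow_smul_eq_zero_of_sum_smul_eq_zero hinj hψ₀ hg (by simpa using rank_le q) hx⟩

end Flatness

section Coaction

section RangeTensor

variable {k M N : Type*} [CommRing k] [AddCommGroup M] [Module k M] [AddCommGroup N] [Module k N]

theorem rTensor_mem_range_subtype_iff (A : Type*) [AddCommGroup A] [Module k A] [Module.Flat k A]
    (f : M →ₗ[k] N) (P : Submodule k N) (z : M ⊗[k] A) :
    f.rTensor A z ∈ LinearMap.range (P.subtype.rTensor A) ↔
      z ∈ LinearMap.range ((P.comap f).subtype.rTensor A) := by
  have hcomap : Function.Exact (P.comap f).subtype (P.mkQ ∘ₗ f) := by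
    rw [LinearMap.exact_iff, LinearMap.ker_comp, Submodule.ker_mkQ, Submodule.range_subtype]
  have hP : Function.Exact P.subtype P.mkQ := LinearMap.exact_subtype_mkQ P
  rw [LinearMap.mem_range, LinearMap.mem_range, ← Set.mem_range, ← Set.mem_range,
    ← Module.Flat.rTensor_exact A hcomap, ← Module.Flat.rTensor_exact A hP, LinearMap.rTensor_comp,
    LinearMap.comp_apply]

theorem lTensor_rTensor_comm {A A' : Type*} [AddCommGroup A] [Module k A] [AddCommGroup A']
    [Module k A'] (f : M →ₗ[k] N) (g : A →ₗ[k] A') (z : M ⊗[k] A) :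
    g.lTensor N (f.rTensor A z) = f.rTensor A' (g.lTensor M z) := by
  rw [← LinearMap.comp_apply, ← LinearMap.comp_apply, LinearMap.lTensor_comp_rTensor,
    LinearMap.rTensor_comp_lTensor]

theorem rid_rTensor (f : M →ₗ[k] N) (z : M ⊗[k] k) :
    TensorProduct.rid k N (f.rTensor k z) = f (TensorProduct.rid k M z) := by
  induction z with
  | zero => simp
  | add x y hx hy => simp only [map_add, hx, hy]
  | tmul m r => simp

theorem assoc_rTensor_rTensor {A A' : Type*} [AddCommGroup A] [Module k A] [AddCommGroup A']
    [Module k A'] (f : M →ₗ[k] N) (z : (M ⊗[k] A) ⊗[k] A') :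
    TensorProduct.assoc k N A A' ((f.rTensor A).rTensor A' z) =
      f.rTensor (A ⊗[k] A') (TensorProduct.assoc k M A A' z) := by
  rw [LinearMap.rTensor_tensor]
  simp

end RangeTensor

variable {k A M : Type*} [Field k] [CommRing A] [HopfAlgebra k A] [AddCommGroup M] [Module k M]

/-- `ρ` is a right coaction of `A` on `M`, that is, it makes `M` a right `A`-comodule. -/
structure IsRightCoaction (ρ : M →ₗ[k] M ⊗[k] A) : Prop where
  counit : ∀ m, TensorProduct.rid k M ((Coalgebra.counit (R := k)).lTensor M (ρ m)) = m
  coassoc : ∀ m, TensorProduct.assoc k M A A (ρ.rTensor A (ρ m)) =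
    (Coalgebra.comul (R := k)).lTensor M (ρ m)

variable {ρ : M →ₗ[k] M ⊗[k] A}

/-- The linear map `m ⊗ a ↦ ρ(m) (1 ⊗ a)`; the antipode shows that it is onto when `ρ` is a right
coaction. -/
noncomputable def coactionMul (ρ : M →ₗ[k] M ⊗[k] A) : M ⊗[k] A →ₗ[k] M ⊗[k] A :=
  (LinearMap.mul' k A).lTensor M ∘ₗ (TensorProduct.assoc k M A A).toLinearMap ∘ₗ ρ.rTensor A

theorem coactionMul_tmul (ρ : M →ₗ[k] M ⊗[k] A) (m : M) (a : A) :
    coactionMul ρ (m ⊗ₜ a) = (LinearMap.mulRight k a).lTensor M (ρ m) := by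
  have hmul : ∀ z : M ⊗[k] A, (LinearMap.mul' k A).lTensor M (TensorProduct.assoc k M A A
      (z ⊗ₜ a)) = (LinearMap.mulRight k a).lTensor M z := by
    intro z
    induction z with
    | zero => simp
    | add x y hx hy => simp only [map_add, TensorProduct.add_tmul, hx, hy]
    | tmul n b => simp
  exact hmul (ρ m)

namespace IsRightCoaction

theorem exists_fg_stable (H : IsRightCoaction ρ) (s : Finset M) :
    ∃ V : Submodule k M, V.FG ∧ (s : Set M) ⊆ V ∧
      ∀ v ∈ V, ρ v ∈ LinearMap.range (V.subtype.rTensor A) := by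
  obtain ⟨W, hWfin, hW⟩ := TensorProduct.exists_finite_submodule_left_of_setFinite
    (ρ '' s) (s.finite_toSet.image ρ)
  let V : Submodule k M := (LinearMap.range (W.subtype.rTensor A)).comap ρ
  have hVW : V ≤ W := by
    rintro v ⟨w, hw⟩
    rw [← H.counit v, ← hw, lTensor_rTensor_comm, rid_rTensor]
    exact Subtype.property _
  refine ⟨V, (Module.Finite.iff_fg.mp hWfin).of_le hVW, fun m hm ↦ hW ⟨m, hm, rfl⟩, ?_⟩
  rintro v ⟨w, hw⟩
  rw [← rTensor_mem_range_subtype_iff]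
  have hassoc : ρ.rTensor A (ρ v) = (W.subtype.rTensor A).rTensor A
      ((TensorProduct.assoc k W A A).symm ((Coalgebra.comul (R := k)).lTensor W w)) := by
    apply (TensorProduct.assoc k M A A).injective
    rw [H.coassoc, assoc_rTensor_rTensor, LinearEquiv.apply_symm_apply, ← hw, lTensor_rTensor_comm]
  rw [hassoc, ← LinearMap.subtype_comp_codRestrict (W.subtype.rTensor A) _
    (LinearMap.mem_range_self _), LinearMap.rTensor_comp]
  exact LinearMap.mem_range_self _ _

theorem coactionMul_lTensor_antipode (H : IsRightCoaction ρ) (m : M) :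
    coactionMul ρ ((HopfAlgebra.antipode k).lTensor M (ρ m)) = m ⊗ₜ 1 := by
  have hmul : ∀ z : (M ⊗[k] A) ⊗[k] A, (LinearMap.mul' k A).lTensor M
      (TensorProduct.assoc k M A A ((HopfAlgebra.antipode k).lTensor (M ⊗[k] A) z)) =
      (LinearMap.mul' k A ∘ₗ (HopfAlgebra.antipode k).lTensor A).lTensor M
        (TensorProduct.assoc k M A A z) := by
    intro z
    rw [LinearMap.lTensor_tensor]
    simp [LinearMap.lTensor_comp]
  have hunit : ∀ z : M ⊗[k] k,
      (Algebra.linearMap k A).lTensor M z = TensorProduct.rid k M z ⊗ₜ 1 := by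
    intro z
    induction z with
    | zero => simp
    | add x y hx hy => simp only [map_add, TensorProduct.add_tmul, hx, hy]
    | tmul n r => simp [Algebra.algebraMap_eq_smul_one, TensorProduct.smul_tmul']
  calc coactionMul ρ ((HopfAlgebra.antipode k).lTensor M (ρ m))
      = (LinearMap.mul' k A ∘ₗ (HopfAlgebra.antipode k).lTensor A).lTensor M
          ((Coalgebra.comul (R := k)).lTensor M (ρ m)) := by
        rw [coactionMul, LinearMap.comp_apply, LinearMap.comp_apply, ← lTensor_rTensor_comm,
          LinearEquiv.coe_coe, hmul, H.coassoc]
    _ = (Algebra.linearMap k A).lTensor M ((Coalgebra.counit (R := k)).lTensor M (ρ m)) := by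
        rw [← LinearMap.lTensor_comp_apply, LinearMap.comp_assoc,
          HopfAlgebra.mul_antipode_lTensor_comul, LinearMap.lTensor_comp_apply]
    _ = m ⊗ₜ 1 := by rw [hunit, H.counit]

end IsRightCoaction

end Coaction

section HopfModule

variable {k C A M N : Type*} [Field k] [CommRing C] [Algebra k C] [CommRing A] [HopfAlgebra k A]
  [AddCommGroup M] [Module k M] [Module C M] [IsScalarTower k C M]
  [AddCommGroup N] [Module k N] [Module C N] [IsScalarTower k C N]

/-- The action of `C ⊗ A` on `M ⊗ A` given by `(c ⊗ a) (m ⊗ b) = cm ⊗ ab`, as a bilinear map: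
there is no such module instance on `M ⊗ A`. -/
noncomputable def tensorSMul : C ⊗[k] A →ₗ[k] M ⊗[k] A →ₗ[k] M ⊗[k] A :=
  TensorProduct.map₂ (Algebra.lsmul k k M).toLinearMap (LinearMap.mul k A)

theorem tensorSMul_tmul_tmul (c : C) (a : A) (m : M) (b : A) :
    tensorSMul (c ⊗ₜ[k] a) (m ⊗ₜ b) = (c • m) ⊗ₜ (a * b) := rfl

theorem rTensor_tensorSMul (f : M →ₗ[C] N) (y : C ⊗[k] A) (z : M ⊗[k] A) :
    (f.restrictScalars k).rTensor A (tensorSMul y z) =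
      tensorSMul y ((f.restrictScalars k).rTensor A z) := by
  induction y with
  | zero => simp
  | add x y hx hy => simp only [map_add, LinearMap.add_apply, hx, hy]
  | tmul c a =>
    induction z with
    | zero => simp
    | add x y hx hy => simp only [map_add, hx, hy]
    | tmul m b => simp [tensorSMul_tmul_tmul]

theorem tensorSMul_eq_mul {L : Type*} [CommRing L] [Algebra k L] [Algebra C L]
    [IsScalarTower k C L] (y : C ⊗[k] A) (z : L ⊗[k] A) :
    tensorSMul y z =
      Algebra.TensorProduct.map (IsScalarTower.toAlgHom k C L) (AlgHom.id k A) y * z := by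
  induction y with
  | zero => simp
  | add x y hx hy => simp only [map_add, LinearMap.add_apply, add_mul, hx, hy]
  | tmul c a =>
    induction z with
    | zero => simp
    | add x y hx hy => simp only [map_add, mul_add, hx, hy]
    | tmul m b => simp [tensorSMul_tmul_tmul, Algebra.smul_def]

/-- `M` is a relative Hopf module for `δ : C → C ⊗ A`: its `C`-module structure and its right
coaction `ρ` of `A` satisfy `ρ(cm) = δ(c) ρ(m)`. -/
structure IsHopfModule (δ : C →ₐ[k] C ⊗[k] A) (ρ : M →ₗ[k] M ⊗[k] A) : Prop
    extends IsRightCoaction ρ where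
  smul : ∀ (c : C) (m : M), ρ (c • m) = tensorSMul (δ c) (ρ m)

/-- The comorphism `C → L ⊗ A` of the orbit map `g ↦ x g` of the point `x : Spec L → Spec C`, where
`G = Spec A` acts on `Spec C` through `δ`. -/
noncomputable def orbitHom (δ : C →ₐ[k] C ⊗[k] A) (L : Type*) [CommRing L] [Algebra k L]
    [Algebra C L] [IsScalarTower k C L] : C →ₐ[k] L ⊗[k] A :=
  (Algebra.TensorProduct.map (IsScalarTower.toAlgHom k C L) (AlgHom.id k A)).comp δ

namespace IsHopfModule

variable {δ : C →ₐ[k] C ⊗[k] A} {ρ : M →ₗ[k] M ⊗[k] A} {ρN : N →ₗ[k] N ⊗[k] A}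

theorem of_injective (H : IsHopfModule δ ρ) {j : N →ₗ[C] M} (hj : Function.Injective j)
    (hρ : ∀ n, (j.restrictScalars k).rTensor A (ρN n) = ρ (j n)) : IsHopfModule δ ρN := by
  have hρ' : (j.restrictScalars k).rTensor A ∘ₗ ρN = ρ ∘ₗ j.restrictScalars k := LinearMap.ext hρ
  have hjA : ∀ (A' : Type _) [AddCommGroup A'] [Module k A'],
      Function.Injective ((j.restrictScalars k).rTensor A') := fun _ _ _ ↦
    Module.Flat.rTensor_preserves_injective_linearMap _ hj
  refine ⟨⟨fun n ↦ hj ?_, fun n ↦ hjA _ ?_⟩, fun c n ↦ hjA A ?_⟩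
  · rw [← LinearMap.restrictScalars_apply k j, ← rid_rTensor, ← lTensor_rTensor_comm, hρ, H.counit]
  · rw [← assoc_rTensor_rTensor, ← LinearMap.rTensor_comp_apply, hρ', LinearMap.rTensor_comp_apply,
      hρ, H.coassoc, ← hρ, lTensor_rTensor_comm]
  · rw [hρ, map_smul, H.smul, ← hρ, rTensor_tensorSMul]

theorem of_surjective (H : IsHopfModule δ ρ) {q : M →ₗ[C] N} (hq : Function.Surjective q)
    (hρ : ∀ m, ρN (q m) = (q.restrictScalars k).rTensor A (ρ m)) : IsHopfModule δ ρN := by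
  have hρ' : ρN ∘ₗ q.restrictScalars k = (q.restrictScalars k).rTensor A ∘ₗ ρ := LinearMap.ext hρ
  refine ⟨⟨hq.forall.mpr fun m ↦ ?_, hq.forall.mpr fun m ↦ ?_⟩, fun c ↦ hq.forall.mpr fun m ↦ ?_⟩
  · rw [hρ, lTensor_rTensor_comm, rid_rTensor, H.counit]
    rfl
  · rw [hρ, ← LinearMap.rTensor_comp_apply, hρ', LinearMap.rTensor_comp_apply,
      assoc_rTensor_rTensor, H.coassoc, lTensor_rTensor_comm]
  · rw [← map_smul, hρ, H.smul, hρ, rTensor_tensorSMul]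

section Stable

variable {P : Submodule C M}
  (hP : ∀ m ∈ P, ρ m ∈ LinearMap.range ((P.subtype.restrictScalars k).rTensor A))

include hP

theorem exists_restrict (H : IsHopfModule δ ρ) :
    ∃ ρP : P →ₗ[k] P ⊗[k] A, IsHopfModule δ ρP := by
  have hinj : Function.Injective ((P.subtype.restrictScalars k).rTensor A) :=
    Module.Flat.rTensor_preserves_injective_linearMap _ P.injective_subtype
  obtain ⟨r, hr⟩ := LinearMap.exists_leftInverse_of_injective _ (LinearMap.ker_eq_bot.mpr hinj)
  refine ⟨r ∘ₗ ρ ∘ₗ P.subtype.restrictScalars k, H.of_injective P.injective_subtype fun m ↦ ?_⟩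
  obtain ⟨w, hw⟩ := hP m m.2
  change (P.subtype.restrictScalars k).rTensor A (r (ρ m)) = ρ m
  rw [← hw, ← LinearMap.comp_apply r, hr, LinearMap.id_apply]

theorem exists_quotient (H : IsHopfModule δ ρ) :
    ∃ ρQ : M ⧸ P →ₗ[k] (M ⧸ P) ⊗[k] A, IsHopfModule δ ρQ := by
  obtain ⟨s, hs⟩ := (P.mkQ.restrictScalars k).exists_rightInverse_of_surjective
    (LinearMap.range_eq_top.mpr P.mkQ_surjective)
  have hker : ∀ m ∈ P, (P.mkQ.restrictScalars k).rTensor A (ρ m) = 0 := by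
    intro m hm
    obtain ⟨w, hw⟩ := hP m hm
    have hzero : P.mkQ.restrictScalars k ∘ₗ P.subtype.restrictScalars k = 0 := by
      ext x
      exact (Submodule.Quotient.mk_eq_zero P).mpr x.2
    rw [← hw, ← LinearMap.rTensor_comp_apply, hzero, LinearMap.rTensor_zero, LinearMap.zero_apply]
  refine ⟨(P.mkQ.restrictScalars k).rTensor A ∘ₗ ρ ∘ₗ s,
    H.of_surjective P.mkQ_surjective fun m ↦ ?_⟩
  have hsm : P.mkQ (s (P.mkQ m)) = P.mkQ m := LinearMap.congr_fun hs (P.mkQ m)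
  rw [LinearMap.comp_apply, LinearMap.comp_apply, ← sub_eq_zero, ← map_sub, ← map_sub]
  exact hker _ ((Submodule.Quotient.eq P).mp hsm)

end Stable

theorem exists_fg_stable_submodule (H : IsHopfModule δ ρ) (s : Finset M) :
    ∃ P : Submodule C M, P.FG ∧ (s : Set M) ⊆ P ∧
      ∀ m ∈ P, ρ m ∈ LinearMap.range ((P.subtype.restrictScalars k).rTensor A) := by
  obtain ⟨V, ⟨t, rfl⟩, hsV, hV⟩ := H.exists_fg_stable s
  have hVP : Submodule.span k (t : Set M) ≤ (Submodule.span C t).restrictScalars k :=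
    Submodule.span_le_restrictScalars k C _
  refine ⟨Submodule.span C t, ⟨t, rfl⟩, hsV.trans hVP, fun m hm ↦ ?_⟩
  induction hm using Submodule.span_induction with
  | mem m hm =>
    obtain ⟨w, hw⟩ := hV m (Submodule.subset_span hm)
    let i : Submodule.span k (t : Set M) →ₗ[k] Submodule.span C (t : Set M) :=
      Submodule.inclusion hVP
    exact ⟨i.rTensor A w, by rw [← hw, ← LinearMap.rTensor_comp_apply]; rfl⟩
  | zero => rw [map_zero]; exact zero_mem _
  | add x y _ _ hx hy => rw [map_add]; exact add_mem hx hy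
  | smul c x _ hx =>
    obtain ⟨w, hw⟩ := hx
    exact ⟨tensorSMul (δ c) w, by rw [rTensor_tensorSMul, hw, H.smul]⟩

section Orbit

variable {L ι : Type*} [CommRing L] [Algebra k L] [Algebra C L] [IsScalarTower k C L]

/-- The pullback along the orbit map of the coordinates `φ` on the fibre of `M` at the `L`-point:
the semilinear map whose components are `M → M ⊗ A → L ⊗ A`. -/
noncomputable def orbitCoordinates (H : IsHopfModule δ ρ) (φ : M →ₗ[C] (ι → L)) :
    M →ₛₗ[(orbitHom δ L : C →+* L ⊗[k] A)] (ι → L ⊗[k] A) where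
  toFun m i := ((LinearMap.proj i ∘ₗ φ).restrictScalars k).rTensor A (ρ m)
  map_add' m n := by ext i; simp only [map_add, Pi.add_apply]
  map_smul' c m := by
    ext i
    rw [H.smul, rTensor_tensorSMul, tensorSMul_eq_mul]
    rfl

theorem span_range_orbitCoordinates [Finite ι] (H : IsHopfModule δ ρ) {φ : M →ₗ[C] (ι → L)}
    (hφ : Function.Surjective φ) :
    Submodule.span (L ⊗[k] A) (Set.range (H.orbitCoordinates φ)) = ⊤ := by
  let Φ : M ⊗[k] A →ₗ[k] (ι → L ⊗[k] A) :=
    LinearMap.pi fun i ↦ ((LinearMap.proj i ∘ₗ φ).restrictScalars k).rTensor A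
  have hmul : ∀ (a : A) (w : L ⊗[k] A),
      (LinearMap.mulRight k a).lTensor L w = (1 ⊗ₜ a) * w := by
    intro a w
    induction w with
    | zero => simp
    | add x y hx hy => simp only [map_add, mul_add, hx, hy]
    | tmul l b => simp [mul_comm]
  have hmem : ∀ z, Φ (coactionMul ρ z) ∈
      Submodule.span (L ⊗[k] A) (Set.range (H.orbitCoordinates φ)) := by
    intro z
    induction z with
    | zero => simp
    | add x y hx hy => simpa only [map_add] using add_mem hx hy
    | tmul m a =>
      have hΦ : Φ (coactionMul ρ (m ⊗ₜ a)) = ((1 : L) ⊗ₜ[k] a) • H.orbitCoordinates φ m := by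
        ext i
        simp only [Φ, LinearMap.pi_apply, coactionMul_tmul, ← lTensor_rTensor_comm, hmul]
        rfl
      exact hΦ ▸ Submodule.smul_mem _ _ (Submodule.subset_span ⟨m, rfl⟩)
  rw [eq_top_iff, ← span_range_extendCoordinates (ψ := (.id : (ι → L) →ₗ[L] (ι → L)))
    (by simp) (Algebra.TensorProduct.includeLeft : L →ₐ[k] L ⊗[k] A).toRingHom, Submodule.span_le]
  rintro _ ⟨x, rfl⟩
  obtain ⟨m, rfl⟩ := hφ x
  have hm := hmem ((HopfAlgebra.antipode k).lTensor M (ρ m))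
  rw [H.coactionMul_lTensor_antipode] at hm
  exact hm

end Orbit

variable {p₀ : Ideal C} [p₀.IsMaximal] (hinj : Function.Injective (orbitHom δ (C ⧸ p₀)))
  (hnil : ∀ (p : Ideal C) [p.IsMaximal], ∀ c ∉ p₀, ¬ IsNilpotent (orbitHom δ (C ⧸ p) c))

include hinj hnil

theorem flat_of_finite [Module.Finite C M] (H : IsHopfModule δ ρ) : Module.Flat C M := by
  refine flat_of_forall_exists_span_range_eq_top (S := fun p ↦ (C ⧸ p) ⊗[k] A)
    (τ := fun p ↦ (orbitHom δ (C ⧸ p) : C →+* (C ⧸ p) ⊗[k] A)) (fun p _ ↦ ?_) hinj hnil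
  obtain ⟨φ, hφ⟩ := exists_surjective_fiberRank M p
  exact ⟨H.orbitCoordinates φ, H.span_range_orbitCoordinates hφ⟩

theorem flat (H : IsHopfModule δ ρ) : Module.Flat C M := by
  refine flat_of_forall_finset_exists_flat_submodule fun s ↦ ?_
  obtain ⟨P, hfg, hsP, hP⟩ := H.exists_fg_stable_submodule s
  have : Module.Finite C P := .of_fg hfg
  obtain ⟨ρP, HP⟩ := H.exists_restrict hP
  exact ⟨P, hsP, HP.flat_of_finite hinj hnil⟩

end IsHopfModule

end HopfModule

section HopfAlgebraHom

variable {k C A : Type*} [Field k] [CommRing C] [HopfAlgebra k C] [CommRing A] [HopfAlgebra k A]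

/-- The right coaction `C → C ⊗ C → C ⊗ A` induced by the comultiplication of `C` and an algebra
homomorphism `f : C → A`. -/
noncomputable def comulAlong (f : C →ₐ[k] A) : C →ₐ[k] C ⊗[k] A :=
  (Algebra.TensorProduct.map (AlgHom.id k C) f).comp (Bialgebra.comulAlgHom k C)

theorem orbitHom_comulAlong (f : C →ₐ[k] A) (L : Type*) [CommRing L] [Algebra k L] [Algebra C L]
    [IsScalarTower k C L] :
    orbitHom (comulAlong f) L =
      (Algebra.TensorProduct.map (AlgHom.id k L) f).comp
        (orbitHom (Bialgebra.comulAlgHom k C) L) := by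
  rw [orbitHom, orbitHom, comulAlong, ← AlgHom.comp_assoc, ← AlgHom.comp_assoc]
  congr 1
  ext <;> simp

theorem orbitHom_comulAlong_injective {f : C →ₐ[k] A} (hf : Function.Injective f) :
    Function.Injective
      (orbitHom (comulAlong f) (C ⧸ RingHom.ker (Bialgebra.counitAlgHom k C))) := by
  let ε : C ⧸ RingHom.ker (Bialgebra.counitAlgHom k C) →ₐ[k] k :=
    Ideal.kerLiftAlg (Bialgebra.counitAlgHom k C)
  let Q := (Algebra.TensorProduct.lid k A).toAlgHom.comp
    (Algebra.TensorProduct.map ε (AlgHom.id k A))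
  have hQ : (Q.comp (Algebra.TensorProduct.map (IsScalarTower.toAlgHom k C _) (AlgHom.id k A))).comp
      (Algebra.TensorProduct.map (AlgHom.id k C) f) =
      f.comp ((Algebra.TensorProduct.lid k C).toAlgHom.comp
        (Algebra.TensorProduct.map (Bialgebra.counitAlgHom k C) (AlgHom.id k C))) := by
    ext c
    · change Q (Ideal.Quotient.mk _ c ⊗ₜ f 1) = f (Coalgebra.counit (R := k) c • 1)
      simp [Q, ε]
    · simp [Q]
  have hQf : ∀ c, Q (orbitHom (comulAlong f) _ c) = f c := fun c ↦ calc
    _ = f (TensorProduct.lid k C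
          ((Coalgebra.counit (R := k)).rTensor C (Coalgebra.comul (R := k) c))) :=
        DFunLike.congr_fun hQ (Coalgebra.comul (R := k) c)
    _ = f c := by rw [Coalgebra.rTensor_counit_comul, TensorProduct.lid_tmul, one_smul]
  exact Function.Injective.of_comp (f := Q) (by rwa [show Q ∘ _ = f from funext hQf])

theorem not_isNilpotent_orbitHom_comulAlong {f : C →ₐ[k] A} (hf : Function.Injective f)
    {L : Type*} [CommRing L] [Nontrivial L] [Algebra k L] [Algebra C L] [IsScalarTower k C L]
    {c : C} (hc : Coalgebra.counit (R := k) c ≠ 0) :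
    ¬ IsNilpotent (orbitHom (comulAlong f) L c) := by
  have hfL : Function.Injective (Algebra.TensorProduct.map (AlgHom.id k L) f) :=
    Module.Flat.lTensor_preserves_injective_linearMap (M := L) f.toLinearMap hf
  let π : C →ₐ[k] L := IsScalarTower.toAlgHom k C L
  let g : L ⊗[k] C →ₐ[k] L := Algebra.TensorProduct.lift (AlgHom.id k L)
    (π.comp (HopfAlgebra.antipodeAlgHom k C)) fun _ _ ↦ .all _ _
  have hg : ∀ y : C ⊗[k] C, g (Algebra.TensorProduct.map π (AlgHom.id k C) y) =
      π (LinearMap.mul' k C ((HopfAlgebra.antipode k).lTensor C y)) := by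
    intro y
    induction y with
    | zero => simp
    | add x y hx hy => simp only [map_add, hx, hy]
    | tmul a b => simp [g]
  have hgc : g (orbitHom (Bialgebra.comulAlgHom k C) L c) =
      algebraMap k L (Coalgebra.counit (R := k) c) := by
    rw [orbitHom, AlgHom.comp_apply, hg, Bialgebra.comulAlgHom_apply,
      HopfAlgebra.mul_antipode_lTensor_comul_apply, AlgHom.commutes]
  rw [orbitHom_comulAlong, AlgHom.comp_apply, IsNilpotent.map_iff hfL]
  intro hnil
  have hnil_counit := hnil.map g
  rw [hgc, IsNilpotent.map_iff (algebraMap k L).injective, isNilpotent_iff_eq_zero] at hnil_counit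
  exact hc hnil_counit

variable [Algebra C A] [IsScalarTower k C A]
  (hΔ : ∀ c : C, Algebra.TensorProduct.map (IsScalarTower.toAlgHom k C A)
    (IsScalarTower.toAlgHom k C A) (Coalgebra.comul (R := k) c) =
      Coalgebra.comul (R := k) (algebraMap C A c))

include hΔ

theorem isHopfModule_comul : IsHopfModule (comulAlong (IsScalarTower.toAlgHom k C A))
    (Coalgebra.comul (R := k) (A := A)) where
  counit a := by rw [Coalgebra.lTensor_counit_comul, TensorProduct.rid_tmul, one_smul]
  coassoc := Coalgebra.coassoc_apply
  smul c a := by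
    have hcomp : (Algebra.TensorProduct.map (IsScalarTower.toAlgHom k C A) (AlgHom.id k A)).comp
        (Algebra.TensorProduct.map (AlgHom.id k C) (IsScalarTower.toAlgHom k C A)) =
        Algebra.TensorProduct.map (IsScalarTower.toAlgHom k C A)
          (IsScalarTower.toAlgHom k C A) := by
      ext <;> simp
    rw [Algebra.smul_def, Bialgebra.comul_mul, ← hΔ, ← hcomp, tensorSMul_eq_mul]
    rfl

theorem comul_mem_range_rTensor_subtype_range (a : A)
    (ha : a ∈ LinearMap.range (Algebra.linearMap C A)) :
    Coalgebra.comul (R := k) a ∈ LinearMap.range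
      (((LinearMap.range (Algebra.linearMap C A)).subtype.restrictScalars k).rTensor A) := by
  obtain ⟨c, rfl⟩ := ha
  have hmap : ∀ y : C ⊗[k] C, Algebra.TensorProduct.map (IsScalarTower.toAlgHom k C A)
      (IsScalarTower.toAlgHom k C A) y ∈ LinearMap.range
        (((LinearMap.range (Algebra.linearMap C A)).subtype.restrictScalars k).rTensor A) := by
    intro y
    induction y with
    | zero => simp
    | add x y hx hy => simpa only [map_add] using add_mem hx hy
    | tmul c d => exact ⟨⟨algebraMap C A c, c, rfl⟩ ⊗ₜ algebraMap C A d, rfl⟩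
  rw [Algebra.linearMap_apply, ← hΔ]
  exact hmap _

theorem faithfullyFlat_of_injective_algebraMap (hinj : Function.Injective (algebraMap C A)) :
    Module.FaithfullyFlat C A := by
  have hmax : (RingHom.ker (Bialgebra.counitAlgHom k C)).IsMaximal :=
    RingHom.ker_isMaximal_of_surjective _ fun x ↦ ⟨algebraMap k C x, by simp⟩
  have flat_of_isHopfModule : ∀ {M : Type _} [AddCommGroup M] [Module k M] [Module C M]
      [IsScalarTower k C M] {ρ : M →ₗ[k] M ⊗[k] A},
      IsHopfModule (comulAlong (IsScalarTower.toAlgHom k C A)) ρ → Module.Flat C M := fun H ↦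
    H.flat (orbitHom_comulAlong_injective hinj) fun p _ c hc ↦
      not_isNilpotent_orbitHom_comulAlong hinj hc
  obtain ⟨ρ, hρ⟩ := (isHopfModule_comul hΔ).exists_quotient
    (comul_mem_range_rTensor_subtype_range hΔ)
  have := flat_of_isHopfModule (isHopfModule_comul hΔ)
  have := flat_of_isHopfModule hρ
  exact faithfullyFlat_of_flat_quotient_range hinj

end HopfAlgebraHom

section SubHopf

variable {k A : Type*} [Field k] [CommRing A] [HopfAlgebra k A] {S : Subalgebra k A}

theorem map_val_val_injective (S : Subalgebra k A) :
    Function.Injective (Algebra.TensorProduct.map S.val S.val) :=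
  TensorProduct.map_injective_of_flat_flat' S.val.toLinearMap S.val.toLinearMap
    Subtype.val_injective Subtype.val_injective

theorem map_val_map_val_val_injective (S : Subalgebra k A) : Function.Injective
    (Algebra.TensorProduct.map S.val (Algebra.TensorProduct.map S.val S.val)) :=
  TensorProduct.map_injective_of_flat_flat' S.val.toLinearMap
    (Algebra.TensorProduct.map S.val S.val).toLinearMap
    Subtype.val_injective (map_val_val_injective S)

theorem exists_comul_restrict (hS : S.IsHopfSub k) : ∃ Δ : S →ₐ[k] S ⊗[k] S,
    (Algebra.TensorProduct.map S.val S.val).comp Δ = (Bialgebra.comulAlgHom k A).comp S.val := by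
  let e := AlgEquiv.ofInjective _ (map_val_val_injective S)
  let Δ := ((Bialgebra.comulAlgHom k A).comp S.val).codRestrict
    (Algebra.TensorProduct.map S.val S.val).range fun a ↦ hS.1 a a.2
  refine ⟨e.symm.toAlgHom.comp Δ, AlgHom.ext fun a ↦ ?_⟩
  exact congrArg Subtype.val (e.apply_symm_apply (Δ a))

section ComulRestrict

variable {Δ : S →ₐ[k] S ⊗[k] S}
  (hΔ : (Algebra.TensorProduct.map S.val S.val).comp Δ = (Bialgebra.comulAlgHom k A).comp S.val)

include hΔ

theorem comul_restrict_coassoc : (Algebra.TensorProduct.assoc k k k S S S).toAlgHom.comp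
    ((Algebra.TensorProduct.map Δ (.id k S)).comp Δ) =
      (Algebra.TensorProduct.map (.id k S) Δ).comp Δ := by
  let v := Algebra.TensorProduct.map S.val S.val
  have hassoc : (Algebra.TensorProduct.map S.val v).comp
      (Algebra.TensorProduct.assoc k k k S S S).toAlgHom =
      (Algebra.TensorProduct.assoc k k k A A A).toAlgHom.comp
        (Algebra.TensorProduct.map v S.val) := by
    ext <;> simp [v, Algebra.TensorProduct.one_def]
  have hleft : (Algebra.TensorProduct.map v S.val).comp (Algebra.TensorProduct.map Δ (.id k S)) =
      (Algebra.TensorProduct.map (Bialgebra.comulAlgHom k A) (.id k A)).comp v := by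
    rw [← Algebra.TensorProduct.map_comp, hΔ, ← Algebra.TensorProduct.map_comp]
    rfl
  have hright : (Algebra.TensorProduct.map S.val v).comp
      (Algebra.TensorProduct.map (.id k S) Δ) =
      (Algebra.TensorProduct.map (.id k A) (Bialgebra.comulAlgHom k A)).comp v := by
    rw [← Algebra.TensorProduct.map_comp, hΔ, ← Algebra.TensorProduct.map_comp]
    rfl
  rw [← AlgHom.cancel_left (map_val_map_val_val_injective S)]
  change (Algebra.TensorProduct.map S.val v).comp _ = (Algebra.TensorProduct.map S.val v).comp _
  rw [← AlgHom.comp_assoc (Algebra.TensorProduct.map S.val v) _ Δ, hright, ← AlgHom.comp_assoc,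
    hassoc, AlgHom.comp_assoc, ← AlgHom.comp_assoc _ _ Δ, hleft, AlgHom.comp_assoc,
    AlgHom.comp_assoc, hΔ]
  ext a
  exact Coalgebra.coassoc_apply (R := k) (a : A)

theorem comul_restrict_rTensor_counit :
    (Algebra.TensorProduct.map ((Bialgebra.counitAlgHom k A).comp S.val) (.id k S)).comp Δ =
      (Algebra.TensorProduct.lid k S).symm := by
  have hinj : Function.Injective (Algebra.TensorProduct.map (.id k k) S.val) :=
    Module.Flat.lTensor_preserves_injective_linearMap S.val.toLinearMap Subtype.val_injective
  have hmap : (Algebra.TensorProduct.map (.id k k) S.val).comp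
      (Algebra.TensorProduct.map ((Bialgebra.counitAlgHom k A).comp S.val) (.id k S)) =
      (Algebra.TensorProduct.map (Bialgebra.counitAlgHom k A) (.id k A)).comp
        (Algebra.TensorProduct.map S.val S.val) := by
    ext <;> simp
  rw [← AlgHom.cancel_left hinj, ← AlgHom.comp_assoc, hmap, AlgHom.comp_assoc, hΔ]
  ext a
  exact Coalgebra.rTensor_counit_comul (R := k) (a : A)

theorem comul_restrict_lTensor_counit :
    (Algebra.TensorProduct.map (.id k S) ((Bialgebra.counitAlgHom k A).comp S.val)).comp Δ =
      (Algebra.TensorProduct.rid k k S).symm := by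
  have hinj : Function.Injective (Algebra.TensorProduct.map S.val (.id k k)) :=
    Module.Flat.rTensor_preserves_injective_linearMap S.val.toLinearMap Subtype.val_injective
  have hmap : (Algebra.TensorProduct.map S.val (.id k k)).comp
      (Algebra.TensorProduct.map (.id k S) ((Bialgebra.counitAlgHom k A).comp S.val)) =
      (Algebra.TensorProduct.map (.id k A) (Bialgebra.counitAlgHom k A)).comp
        (Algebra.TensorProduct.map S.val S.val) := by
    ext <;> simp
  rw [← AlgHom.cancel_left hinj, ← AlgHom.comp_assoc, hmap, AlgHom.comp_assoc, hΔ]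
  ext a
  exact Coalgebra.lTensor_counit_comul (R := k) (a : A)

variable {σ : S →ₗ[k] S} (hσ : ∀ a : S, (σ a : A) = HopfAlgebra.antipode k (a : A))

include hσ

theorem mul_rTensor_antipode_restrict (a : S) : LinearMap.mul' k S (σ.rTensor S (Δ a)) =
    algebraMap k S (Coalgebra.counit (R := k) (a : A)) := by
  have hmul : ∀ y : S ⊗[k] S, (LinearMap.mul' k S (σ.rTensor S y) : A) = LinearMap.mul' k A
      ((HopfAlgebra.antipode k).rTensor A (Algebra.TensorProduct.map S.val S.val y)) := by
    intro y
    induction y with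
    | zero => simp
    | add x y hx hy => simp only [map_add, Subalgebra.coe_add, hx, hy]
    | tmul a b => simp [hσ]
  apply Subtype.val_injective
  rw [hmul, ← AlgHom.comp_apply, hΔ]
  exact HopfAlgebra.mul_antipode_rTensor_comul_apply (a : A)

theorem mul_lTensor_antipode_restrict (a : S) : LinearMap.mul' k S (σ.lTensor S (Δ a)) =
    algebraMap k S (Coalgebra.counit (R := k) (a : A)) := by
  have hmul : ∀ y : S ⊗[k] S, (LinearMap.mul' k S (σ.lTensor S y) : A) = LinearMap.mul' k A
      ((HopfAlgebra.antipode k).lTensor A (Algebra.TensorProduct.map S.val S.val y)) := by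
    intro y
    induction y with
    | zero => simp
    | add x y hx hy => simp only [map_add, Subalgebra.coe_add, hx, hy]
    | tmul a b => simp [hσ]
  apply Subtype.val_injective
  rw [hmul, ← AlgHom.comp_apply, hΔ]
  exact HopfAlgebra.mul_antipode_lTensor_comul_apply (a : A)

end ComulRestrict

/-- The Hopf algebra structure that a sub-Hopf-algebra inherits; its comultiplication is determined
by injectivity of `S ⊗ S → A ⊗ A`. -/
@[reducible] noncomputable def hopfAlgebraOfIsHopfSub (hS : S.IsHopfSub k) : HopfAlgebra k S :=
  let Δ := (exists_comul_restrict hS).choose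
  have hΔ := (exists_comul_restrict hS).choose_spec
  let σ : S →ₗ[k] S := ((HopfAlgebra.antipode k).comp S.val.toLinearMap).codRestrict
    S.toSubmodule fun a ↦ hS.2 a a.2
  have hσ (a : S) : (σ a : A) = HopfAlgebra.antipode k (a : A) := rfl
  let : Bialgebra k S := .ofAlgHom Δ ((Bialgebra.counitAlgHom k A).comp S.val)
    (comul_restrict_coassoc hΔ) (comul_restrict_rTensor_counit hΔ)
    (comul_restrict_lTensor_counit hΔ)
  { antipode := σ
    mul_antipode_rTensor_comul := LinearMap.ext (mul_rTensor_antipode_restrict hΔ hσ)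
    mul_antipode_lTensor_comul := LinearMap.ext (mul_lTensor_antipode_restrict hΔ hσ) }

theorem faithfullyFlat_of_isHopfSub (hS : S.IsHopfSub k) : Module.FaithfullyFlat S A := by
  let := hopfAlgebraOfIsHopfSub hS
  exact faithfullyFlat_of_injective_algebraMap (k := k)
    (DFunLike.congr_fun (exists_comul_restrict hS).choose_spec) Subtype.val_injective

end SubHopf

section FaithfullyFlatDescent

theorem flat_of_flat_of_faithfullyFlat (R S T : Type*) [CommRing R] [CommRing S] [CommRing T]
    [Algebra R S] [Algebra S T] [Algebra R T] [IsScalarTower R S T] [Module.Flat R T]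
    [Module.FaithfullyFlat S T] : Module.Flat R S := by
  rw [Module.Flat.iff_lTensor_preserves_injective_linearMap]
  intro N N' _ _ _ _ f hf
  let e := TensorProduct.AlgebraTensorModule.cancelBaseChange R S S T N
  let e' := TensorProduct.AlgebraTensorModule.cancelBaseChange R S S T N'
  have hcomm : f.lTensor T ∘ e = e' ∘ (f.baseChange S).lTensor T :=
    funext (DFunLike.congr_fun (TensorProduct.AlgebraTensorModule.lTensor_comp_cancelBaseChange
      (R := R) (A := S) (B := S) (M := T) f))
  have hT : Function.Injective (f.lTensor T ∘ e) :=
    (Module.Flat.lTensor_preserves_injective_linearMap f hf).comp e.injective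
  rw [hcomm] at hT
  exact (Module.FaithfullyFlat.lTensor_injective_iff_injective S T (f.baseChange S)).1 hT.of_comp

theorem faithfullyFlat_of_faithfullyFlat_comp {R S T : Type*} [CommRing R] [CommRing S]
    [CommRing T] {f : R →+* S} {g : S →+* T} (hgf : (g.comp f).FaithfullyFlat)
    (hg : g.FaithfullyFlat) : f.FaithfullyFlat := by
  rw [RingHom.FaithfullyFlat.iff_flat_and_comap_surjective] at hgf ⊢
  obtain ⟨hflat, hsurj⟩ := hgf
  rw [PrimeSpectrum.comap_comp] at hsurj
  refine ⟨?_, hsurj.of_comp⟩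
  algebraize [f, g, g.comp f]
  exact flat_of_flat_of_faithfullyFlat R S T

-- `RingHom.FaithfullyFlat.stableUnderComposition` needs the three rings in one universe.
theorem faithfullyFlat_comp {R S T : Type*} [CommRing R] [CommRing S] [CommRing T] {f : R →+* S}
    {g : S →+* T} (hf : f.FaithfullyFlat) (hg : g.FaithfullyFlat) :
    (g.comp f).FaithfullyFlat := by
  algebraize [f, g, g.comp f]
  rw [← RingHom.algebraMap_toAlgebra (g.comp f), RingHom.faithfullyFlat_algebraMap_iff]
  exact .trans R S T

variable {R : Type*} (B : Type*) {C D : Type*} [CommRing R] [CommRing B] [Algebra R B] [CommRing C]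
  [Algebra R C] [CommRing D] [Algebra R D]

theorem faithfullyFlat_includeRight [Module.FaithfullyFlat R B] :
    (Algebra.TensorProduct.includeRight : D →ₐ[R] B ⊗[R] D).toRingHom.FaithfullyFlat := by
  have hleft : (algebraMap D (D ⊗[R] B)).FaithfullyFlat :=
    RingHom.faithfullyFlat_algebraMap_iff.2 inferInstance
  have hcomm : (Algebra.TensorProduct.comm R D B).toAlgHom.toRingHom.FaithfullyFlat :=
    .of_bijective (Algebra.TensorProduct.comm R D B).bijective
  exact faithfullyFlat_comp hleft hcomm

attribute [local instance] Algebra.TensorProduct.rightAlgebra in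
theorem faithfullyFlat_lTensor {f : C →ₐ[R] D} (hf : f.toRingHom.FaithfullyFlat) :
    (Algebra.TensorProduct.lTensor (S := B) B f).toRingHom.FaithfullyFlat := by
  algebraize [f.toRingHom, (Algebra.TensorProduct.lTensor (S := B) B f).toRingHom]
  let e : B ⊗[R] D ≃ₐ[B ⊗[R] C] (B ⊗[R] C) ⊗[C] D :=
    { __ := (Algebra.IsPushout.cancelBaseChangeAlg _ _ _ _ _).symm,
      commutes' := DFunLike.congr_fun
        (Algebra.IsPushout.cancelBaseChange_symm_comp_lTensor R C D B) }
  exact .of_linearEquiv _ _ e.toLinearEquiv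

theorem faithfullyFlat_of_faithfullyFlat_lTensor [Module.FaithfullyFlat R B] {f : C →ₐ[R] D}
    (hf : (Algebra.TensorProduct.lTensor (S := B) B f).toRingHom.FaithfullyFlat) :
    f.toRingHom.FaithfullyFlat := by
  have hC := faithfullyFlat_includeRight (R := R) (D := C) B
  have hD := faithfullyFlat_includeRight (R := R) (D := D) B
  refine faithfullyFlat_of_faithfullyFlat_comp ?_ hD
  have hsquare : Algebra.TensorProduct.includeRight.toRingHom.comp f.toRingHom =
      (Algebra.TensorProduct.lTensor (S := B) B f).toRingHom.comp
        Algebra.TensorProduct.includeRight.toRingHom := by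
    ext c
    simp
  rw [hsquare]
  exact faithfullyFlat_comp hC hf

end FaithfullyFlatDescent

theorem exists_algEquiv_of_range_eq {R X Y Z : Type*} [CommSemiring R] [Semiring X] [Algebra R X]
    [Semiring Y] [Algebra R Y] [Semiring Z] [Algebra R Z] {f : X →ₐ[R] Z} {g : Y →ₐ[R] Z}
    (hf : Function.Injective f) (hg : Function.Injective g) (hrange : f.range = g.range) :
    ∃ e : X ≃ₐ[R] Y, g.comp e.toAlgHom = f := by
  let ef := AlgEquiv.ofInjective f hf
  let eg := AlgEquiv.ofInjective g hg
  let efg := Subalgebra.equivOfEq _ _ hrange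
  exact ⟨(ef.trans efg).trans eg.symm,
    AlgHom.ext fun x ↦ congrArg Subtype.val (eg.apply_symm_apply (efg (ef x)))⟩

section BaseChange

variable {k A : Type*} (B : Type*) [CommRing k] [CommRing A] [Algebra k A] [CommRing B]
  [Algebra k B]

theorem lTensor_val_injective [Module.Flat k B] (C : Subalgebra k A) :
    Function.Injective (Algebra.TensorProduct.lTensor (S := B) B C.val) :=
  Module.Flat.lTensor_preserves_injective_linearMap C.val.toLinearMap Subtype.val_injective

theorem baseChange_mono {C D : Subalgebra k A} (hCD : C ≤ D) :
    C.baseChange B ≤ D.baseChange B := by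
  rintro _ ⟨z, rfl⟩
  induction z with
  | zero => exact zero_mem _
  | add x y hx hy => simpa only [map_add] using add_mem hx hy
  | tmul b c => exact D.tmul_mem_baseChange (hCD c.2) b

variable {B} in
theorem exists_mem_baseChange_of_directed {I : Type*} [Preorder I] [Nonempty I]
    [IsDirected I (· ≤ ·)] {𝒜 : I → Subalgebra k A} (hmono : Monotone 𝒜)
    (hunion : ∀ a : A, ∃ i, a ∈ 𝒜 i) (w : B ⊗[k] A) : ∃ i, w ∈ (𝒜 i).baseChange B := by
  induction w with
  | zero => exact ⟨Classical.arbitrary I, zero_mem _⟩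
  | tmul b a =>
    obtain ⟨i, hi⟩ := hunion a
    exact ⟨i, (𝒜 i).tmul_mem_baseChange hi b⟩
  | add x y hx hy =>
    obtain ⟨i, hx⟩ := hx
    obtain ⟨j, hy⟩ := hy
    obtain ⟨l, hil, hjl⟩ := exists_ge_ge i j
    exact ⟨l, add_mem (baseChange_mono B (hmono hil) hx) (baseChange_mono B (hmono hjl) hy)⟩

end BaseChange

section Torsor

section CoactionPreimage

variable {k A B : Type*} [CommRing k] [CommRing A] [Algebra k A] [CommRing B] [Algebra k B]

/-- The subalgebra of those `b : B` whose coaction `ρ b` lies in `B ⊗ C`. When `Spec B` is a torsor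
under `Spec A` and `C` is a sub-Hopf-algebra of `A`, this is the coordinate ring of the induced
torsor under the quotient group `Spec C`. -/
noncomputable def coactionPreimage (ρ : B →ₐ[k] B ⊗[k] A) (C : Subalgebra k A) :
    Subalgebra k B :=
  ((C.baseChange B).restrictScalars k).comap ρ

theorem mem_coactionPreimage {ρ : B →ₐ[k] B ⊗[k] A} {C : Subalgebra k A} {b : B} :
    b ∈ coactionPreimage ρ C ↔ ρ b ∈ C.baseChange B := Iff.rfl

theorem coactionPreimage_mono (ρ : B →ₐ[k] B ⊗[k] A) : Monotone (coactionPreimage ρ) :=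
  fun _ _ hCD _ hb ↦ baseChange_mono B hCD hb

theorem exact_coactionPreimage_val (ρ : B →ₐ[k] B ⊗[k] A) (C : Subalgebra k A) :
    Function.Exact (coactionPreimage ρ C).val.toLinearMap
      (C.toSubmodule.mkQ.lTensor B ∘ₗ ρ.toLinearMap) := by
  have hC : Function.Exact (C.toSubmodule.subtype.lTensor B) (C.toSubmodule.mkQ.lTensor B) :=
    lTensor_exact B (LinearMap.exact_subtype_mkQ _) (Submodule.mkQ_surjective _)
  intro b
  rw [LinearMap.comp_apply, hC]
  exact ⟨fun hb ↦ ⟨⟨b, hb⟩, rfl⟩, fun ⟨x, hx⟩ ↦ hx ▸ x.2⟩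

/-- The `B`-algebra map `B ⊗ B → B ⊗ A`, `b ⊗ b' ↦ b • ρ b'`, whose bijectivity is the torsor
condition. -/
noncomputable def galoisMap (ρ : B →ₐ[k] B ⊗[k] A) : B ⊗[k] B →ₐ[B] B ⊗[k] A :=
  Algebra.TensorProduct.lift Algebra.TensorProduct.includeLeft ρ fun _ _ ↦ Commute.all _ _

theorem galoisMap_tmul (ρ : B →ₐ[k] B ⊗[k] A) (b b' : B) :
    galoisMap ρ (b ⊗ₜ b') = b • ρ b' := by
  rw [galoisMap, Algebra.TensorProduct.lift_tmul, Algebra.smul_def]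
  rfl

theorem galoisMap_lTensor_coactionPreimage_mem (ρ : B →ₐ[k] B ⊗[k] A) (C : Subalgebra k A)
    (z : B ⊗[k] coactionPreimage ρ C) :
    galoisMap ρ (Algebra.TensorProduct.lTensor (S := B) B (coactionPreimage ρ C).val z) ∈
      C.baseChange B := by
  induction z with
  | zero => simp
  | add x y hx hy => simpa only [map_add] using add_mem hx hy
  | tmul b d =>
    rw [Algebra.TensorProduct.map_tmul, galoisMap_tmul]
    exact Subalgebra.smul_mem _ (mem_coactionPreimage.1 d.2) _

theorem assoc_rTensor_galoisMap (ρ : B →ₐ[k] B ⊗[k] A) {Q : Type*} [AddCommGroup Q] [Module k Q]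
    (b : B) (w : B ⊗[k] Q) :
    TensorProduct.assoc k B A Q (((galoisMap ρ).toLinearMap.restrictScalars k).rTensor Q
      ((TensorProduct.assoc k B B Q).symm (b ⊗ₜ w))) =
    b • TensorProduct.assoc k B A Q (ρ.toLinearMap.rTensor Q w) := by
  have hassoc : ∀ (v : B ⊗[k] A) (q : Q), TensorProduct.assoc k B A Q ((b • v) ⊗ₜ q) =
      b • TensorProduct.assoc k B A Q (v ⊗ₜ q) := fun v q ↦
    map_smul (TensorProduct.AlgebraTensorModule.assoc k k B B A Q) b (v ⊗ₜ q)
  induction w with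
  | zero => simp
  | add x y hx hy => simp only [map_add, TensorProduct.tmul_add, smul_add, hx, hy]
  | tmul u q =>
    rw [TensorProduct.assoc_symm_tmul, LinearMap.rTensor_tmul, LinearMap.rTensor_tmul]
    exact (congrArg (fun v ↦ TensorProduct.assoc k B A Q (v ⊗ₜ q)) (galoisMap_tmul ρ b u)).trans
      (hassoc (ρ u) q)

end CoactionPreimage

variable {k A B : Type*} [Field k] [CommRing A] [HopfAlgebra k A] [CommRing B] [Algebra k B]
  {ρ : B →ₐ[k] B ⊗[k] A} {C : Subalgebra k A}

theorem lTensor_mkQ_comul_of_mem (hC : C.IsHopfSub k) {c : A} (hc : c ∈ C) :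
    C.toSubmodule.mkQ.lTensor A (Coalgebra.comul (R := k) c) = 0 := by
  obtain ⟨t, ht⟩ := hC.1 c hc
  have hmkQ : C.toSubmodule.mkQ ∘ₗ C.val.toLinearMap = 0 :=
    LinearMap.ext fun a ↦ (Submodule.Quotient.mk_eq_zero _).2 a.2
  rw [← ht, ← LinearMap.comp_apply, LinearMap.lTensor_comp_map, hmkQ, TensorProduct.map_zero_right,
    LinearMap.zero_apply]

theorem lTensor_mkQ_comul_of_mem_baseChange (hC : C.IsHopfSub k) {w : B ⊗[k] A}
    (hw : w ∈ C.baseChange B) :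
    (C.toSubmodule.mkQ.lTensor A).lTensor B ((Coalgebra.comul (R := k)).lTensor B w) = 0 := by
  obtain ⟨z, rfl⟩ := hw
  induction z with
  | zero => simp
  | add x y hx hy => rw [map_add, map_add, map_add, hx, hy, add_zero]
  | tmul b c =>
    change b ⊗ₜ C.toSubmodule.mkQ.lTensor A (Coalgebra.comul (R := k) (c : A)) = 0
    rw [lTensor_mkQ_comul_of_mem hC c.2, TensorProduct.tmul_zero]

namespace IsTorsorAlgebra

theorem galoisMap_bijective (hρ : IsTorsorAlgebra k A B ρ) : Function.Bijective (galoisMap ρ) :=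
  hρ.galois_bijective

theorem assoc_rTensor_galoisMap_lTensor (hρ : IsTorsorAlgebra k A B ρ) (y : B ⊗[k] B) :
    TensorProduct.assoc k B A A (((galoisMap ρ).toLinearMap.restrictScalars k).rTensor A
      ((TensorProduct.assoc k B B A).symm (ρ.toLinearMap.lTensor B y))) =
    (Coalgebra.comul (R := k)).lTensor B (galoisMap ρ y) := by
  induction y with
  | zero => simp
  | add x y hx hy => simp only [map_add, hx, hy]
  | tmul b b' =>
    rw [galoisMap_tmul, LinearMap.lTensor_tmul, assoc_rTensor_galoisMap]
    exact (congrArg (b • ·) (hρ.coassoc b')).trans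
      (map_smul ((Coalgebra.comul (R := k) (A := A)).baseChange B) b (ρ b')).symm

theorem mem_range_lTensor_of_galoisMap_mem (hρ : IsTorsorAlgebra k A B ρ) (hC : C.IsHopfSub k)
    {y : B ⊗[k] B} (hy : galoisMap ρ y ∈ C.baseChange B) :
    y ∈ (Algebra.TensorProduct.lTensor (S := B) B (coactionPreimage ρ C).val).range := by
  let q := C.toSubmodule.mkQ
  let γ := (galoisMap ρ).toLinearMap.restrictScalars k
  let y' := (TensorProduct.assoc k B B A).symm (ρ.toLinearMap.lTensor B y)
  have hassoc : TensorProduct.assoc k B A A (γ.rTensor A y') =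
      (Coalgebra.comul (R := k)).lTensor B (galoisMap ρ y) :=
    hρ.assoc_rTensor_galoisMap_lTensor y
  have hγy' : q.lTensor (B ⊗[k] A) (γ.rTensor A y') = 0 := by
    rw [LinearMap.lTensor_tensor, LinearMap.comp_apply, LinearMap.comp_apply, LinearEquiv.coe_coe,
      LinearEquiv.coe_coe, hassoc, lTensor_mkQ_comul_of_mem_baseChange hC hy, map_zero]
  have hγ : Function.Injective (γ.rTensor (A ⧸ C.toSubmodule)) :=
    Module.Flat.rTensor_preserves_injective_linearMap γ hρ.galoisMap_bijective.injective
  have hy' : q.lTensor (B ⊗[k] B) y' = 0 := by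
    rw [lTensor_rTensor_comm] at hγy'
    exact hγ (hγy'.trans (map_zero _).symm)
  have hqρ : (q.lTensor B ∘ₗ ρ.toLinearMap).lTensor B y = 0 := by
    rw [LinearMap.lTensor_tensor, LinearMap.comp_apply, LinearMap.comp_apply, LinearEquiv.coe_coe,
      LinearEquiv.coe_coe, LinearEquiv.apply_symm_apply, LinearEquiv.map_eq_zero_iff] at hy'
    rw [LinearMap.lTensor_comp_apply, hy']
  exact (Module.Flat.lTensor_exact B (exact_coactionPreimage_val ρ C) y).1 hqρ

theorem range_galoisMap_comp_lTensor (hρ : IsTorsorAlgebra k A B ρ) (hC : C.IsHopfSub k) :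
    ((galoisMap ρ).comp
      (Algebra.TensorProduct.lTensor (S := B) B (coactionPreimage ρ C).val)).range =
      C.baseChange B := by
  refine le_antisymm ?_ fun w hw ↦ ?_
  · rintro _ ⟨z, rfl⟩
    exact galoisMap_lTensor_coactionPreimage_mem ρ C z
  · obtain ⟨y, rfl⟩ := hρ.galoisMap_bijective.surjective w
    obtain ⟨z, rfl⟩ := hρ.mem_range_lTensor_of_galoisMap_mem hC hw
    exact ⟨z, rfl⟩

theorem exists_algEquiv (hρ : IsTorsorAlgebra k A B ρ) (hC : C.IsHopfSub k) :
    ∃ e : B ⊗[k] coactionPreimage ρ C ≃ₐ[B] B ⊗[k] C,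
      (Algebra.TensorProduct.lTensor (S := B) B C.val).comp e.toAlgHom =
        (galoisMap ρ).comp
          (Algebra.TensorProduct.lTensor (S := B) B (coactionPreimage ρ C).val) := by
  exact exists_algEquiv_of_range_eq
    (hρ.galoisMap_bijective.injective.comp (lTensor_val_injective B (coactionPreimage ρ C)))
    (lTensor_val_injective B C) (hρ.range_galoisMap_comp_lTensor hC)

theorem faithfullyFlat_coactionPreimage_val (hρ : IsTorsorAlgebra k A B ρ)
    (hC : C.IsHopfSub k) : (coactionPreimage ρ C).val.toRingHom.FaithfullyFlat := by
  have := hρ.nontrivial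
  obtain ⟨e, he⟩ := hρ.exists_algEquiv hC
  have hCA : (Algebra.TensorProduct.lTensor (S := B) B C.val).toRingHom.FaithfullyFlat :=
    faithfullyFlat_lTensor B
      (RingHom.faithfullyFlat_algebraMap_iff.2 (faithfullyFlat_of_isHopfSub hC))
  have hsquare : (galoisMap ρ).toRingHom.comp
      (Algebra.TensorProduct.lTensor (S := B) B (coactionPreimage ρ C).val).toRingHom =
      (Algebra.TensorProduct.lTensor (S := B) B C.val).toRingHom.comp e.toAlgHom.toRingHom :=
    congrArg AlgHom.toRingHom he.symm
  apply faithfullyFlat_of_faithfullyFlat_lTensor B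
  refine faithfullyFlat_of_faithfullyFlat_comp (g := (galoisMap ρ).toRingHom) ?_
    (.of_bijective hρ.galoisMap_bijective)
  rw [hsquare]
  exact faithfullyFlat_comp (.of_bijective e.bijective) hCA

theorem fg_coactionPreimage (hρ : IsTorsorAlgebra k A B ρ) (hC : C.IsHopfSub k)
    (hfg : C.FG) : (coactionPreimage ρ C).FG := by
  have := hρ.nontrivial
  have : Algebra.FiniteType k C := C.fg_iff_finiteType.1 hfg
  obtain ⟨e, -⟩ := hρ.exists_algEquiv hC
  have : Algebra.FiniteType B (B ⊗[k] coactionPreimage ρ C) :=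
    Algebra.FiniteType.equiv inferInstance e.symm
  exact (Subalgebra.fg_iff_finiteType _).2
    (Algebra.FiniteType.of_finiteType_tensorProduct_of_faithfullyFlat (R := k) B)

theorem faithfullyFlat_inclusion (hρ : IsTorsorAlgebra k A B ρ) {D : Subalgebra k A}
    (hC : C.IsHopfSub k) (hD : D.IsHopfSub k) (hCD : C ≤ D) :
    (Subalgebra.inclusion (coactionPreimage_mono ρ hCD)).toRingHom.FaithfullyFlat :=
  faithfullyFlat_of_faithfullyFlat_comp (g := (coactionPreimage ρ D).val.toRingHom)
    (hρ.faithfullyFlat_coactionPreimage_val hC) (hρ.faithfullyFlat_coactionPreimage_val hD)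

end IsTorsorAlgebra

end Torsor

/-- A torsor algebra `B` under a commutative Hopf algebra `A` over a field `k` which is the
directed union of finitely generated sub-Hopf-algebras `Aᵢ`, `i ∈ I`, is the directed union of a
monotone family of nonzero finitely generated `k`-subalgebras `B_ω`, indexed by a directed poset
`Ω` of the same cardinality as `I`, with all inclusions `B_ω₁ ⊆ B_ω₂` (for `ω₁ ≤ ω₂`)
faithfully flat. -/
theorem torsor_algebra_directed_union {k : Type} [Field k]
    {A : Type} [CommRing A] [HopfAlgebra k A]
    {I : Type} [PartialOrder I] [Nonempty I] [IsDirected I (· ≤ ·)]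
    (𝒜 : I → Subalgebra k A) (hmono : Monotone 𝒜)
    (hfg : ∀ i, (𝒜 i).FG) (hhopf : ∀ i, (𝒜 i).IsHopfSub k)
    (hunion : ∀ a : A, ∃ i, a ∈ 𝒜 i)
    {B : Type} [CommRing B] [Algebra k B]
    (ρ : B →ₐ[k] B ⊗[k] A) (hρ : IsTorsorAlgebra k A B ρ) :
    ∃ (Ω : Type) (_ : PartialOrder Ω) (_ : Nonempty Ω) (_ : IsDirected Ω (· ≤ ·)),
      Cardinal.mk Ω = Cardinal.mk I ∧
      ∃ (ℬ : Ω → Subalgebra k B) (hm : Monotone ℬ),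
        (∀ ω, (ℬ ω).FG) ∧
        (∀ ω, Nontrivial (ℬ ω)) ∧
        (∀ b : B, ∃ ω, b ∈ ℬ ω) ∧
        (∀ ω₁ ω₂ : Ω, ∀ h : ω₁ ≤ ω₂,
          letI : Algebra (ℬ ω₁) (ℬ ω₂) := (Subalgebra.inclusion (hm h)).toRingHom.toAlgebra
          Module.FaithfullyFlat (ℬ ω₁) (ℬ ω₂)) := by
  have := hρ.nontrivial
  exact ⟨I, inferInstance, inferInstance, inferInstance, rfl, fun i ↦ coactionPreimage ρ (𝒜 i),
    (coactionPreimage_mono ρ).comp hmono,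
    fun i ↦ hρ.fg_coactionPreimage (hhopf i) (hfg i),
    fun _ ↦ inferInstance,
    fun b ↦ exists_mem_baseChange_of_directed hmono hunion (ρ b),
    fun i j hij ↦ hρ.faithfullyFlat_inclusion (hhopf i) (hhopf j) (hmono hij)⟩
end

section
/- Let k be an algebraically closed field and let A be a commutative Hopf algebra over k which is the union of a directed (under inclusion) family (A_i)_{i ∈ I} of finitely generated sub-Hopf-algebras, where the cardinality of the directed index poset I is strictly less than the cardinality of k. Then every torsor algebra B for A admits a k-algebra homomorphism B → k. (Equivalently: every torsor under the affine group scheme G = Spec A over k is trivial, i.e. has a k-rational point.) -/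
open TensorProduct

/-!
Finite generating sets of the subalgebras `𝒜 i` together form a set `S` generating `A` with
`#S < #k`, since `k` is infinite. The Galois isomorphism `B ⊗ B ≃ B ⊗ A` of `B`-algebras makes `B`
inherit from `A` both finite generation (by faithfully flat descent) and its dimension over `k`.
Let `m` be a maximal ideal of `B`. If `S` is finite, Zariski's lemma shows that `B ⧸ m` is algebraic
over `k`. If `S` is infinite, then `dim (B ⧸ m) ≤ dim B = dim A ≤ #S < #k`, whereas a transcendental
`x` would provide the `#k` linearly independent elements `(x - a)⁻¹`, `a ∈ k`. In both cases
`B ⧸ m = k` because `k` is algebraically closed.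
-/

open Cardinal

universe u v w

section Points

variable {k : Type u} [Field k]

theorem isAlgebraic_of_lift_rank_lt_lift_mk {K : Type v} [Field K] [Algebra k K]
    (h : lift.{u} (Module.rank k K) < lift.{v} #k) : Algebra.IsAlgebraic k K := by
  refine ⟨fun x ↦ by_contra fun hx : Transcendental k x ↦ h.not_ge ?_⟩
  simpa using hx.linearIndependent_sub_inv.cardinal_lift_le_rank

variable [IsAlgClosed k] {B : Type v} [CommRing B] [Algebra k B]

theorem nonempty_algHom_of_isAlgebraic_quotient (p : Ideal B) [p.IsPrime]
    [Algebra.IsAlgebraic k (B ⧸ p)] : Nonempty (B →ₐ[k] k) :=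
  ⟨(IsAlgClosed.lift : (B ⧸ p) →ₐ[k] k).comp (Ideal.Quotient.mkₐ k p)⟩

variable [Nontrivial B]

theorem nonempty_algHom_of_finiteType [Algebra.FiniteType k B] : Nonempty (B →ₐ[k] k) := by
  obtain ⟨m, hm⟩ := Ideal.exists_maximal B
  let _ : Field (B ⧸ m) := Ideal.Quotient.field m
  have : Module.Finite k (B ⧸ m) := finite_of_finite_type_of_isJacobsonRing k (B ⧸ m)
  exact nonempty_algHom_of_isAlgebraic_quotient m

theorem nonempty_algHom_of_lift_rank_lt_lift_mk (h : lift.{u} (Module.rank k B) < lift.{v} #k) :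
    Nonempty (B →ₐ[k] k) := by
  obtain ⟨m, hm⟩ := Ideal.exists_maximal B
  let _ : Field (B ⧸ m) := Ideal.Quotient.field m
  have hrank : Module.rank k (B ⧸ m) ≤ Module.rank k B :=
    (Ideal.Quotient.mkₐ k m).toLinearMap.rank_le_of_surjective (Ideal.Quotient.mkₐ_surjective k m)
  have : Algebra.IsAlgebraic k (B ⧸ m) :=
    isAlgebraic_of_lift_rank_lt_lift_mk ((lift_le.2 hrank).trans_lt h)
  exact nonempty_algHom_of_isAlgebraic_quotient m

end Points

theorem rank_le_max_of_adjoin_eq_top {k : Type u} [CommRing k] {A : Type v} [Ring A]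
    [Algebra k A] {S : Set A} (hS : Algebra.adjoin k S = ⊤) :
    Module.rank k A ≤ max #S ℵ₀ := by
  rw [← Subalgebra.topEquiv.toLinearEquiv.rank_eq, ← hS]
  exact Algebra.rank_adjoin_le S

theorem lift_mk_iUnion_lt_of_finite {α : Type v} {ι : Type w} {s : ι → Set α}
    (hs : ∀ i, (s i).Finite) {κ : Cardinal.{max v w}} (hκ : ℵ₀ ≤ κ) (hι : lift.{v} #ι < κ) :
    lift.{w} #(⋃ i, s i) < κ := by
  cases finite_or_infinite ι with
  | inl _ => exact (lift_lt_aleph0.2 (Set.finite_iUnion hs).lt_aleph0).trans_le hκ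
  | inr _ =>
    calc lift.{w} #(⋃ i, s i)
      _ ≤ Cardinal.sum fun i ↦ #(s i) := mk_iUnion_le_sum_mk_lift
      _ ≤ Cardinal.sum fun _ : ι ↦ ℵ₀ := sum_le_sum _ _ fun i ↦ (hs i).lt_aleph0.le
      _ = lift.{v} #ι := by simp
      _ < κ := hι

theorem exists_adjoin_eq_iSup_and_lift_mk_lt {k : Type u} [CommSemiring k] {A : Type v} [Semiring A]
    [Algebra k A] {ι : Type w} {𝒜 : ι → Subalgebra k A} (hfg : ∀ i, (𝒜 i).FG)
    {κ : Cardinal.{max v w}} (hκ : ℵ₀ ≤ κ) (hι : lift.{v} #ι < κ) :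
    ∃ S : Set A, Algebra.adjoin k S = ⨆ i, 𝒜 i ∧ lift.{w} #S < κ := by
  choose s hs using hfg
  refine ⟨⋃ i, s i, ?_, lift_mk_iUnion_lt_of_finite (fun i ↦ (s i).finite_toSet) hκ hι⟩
  simp only [Algebra.adjoin_iUnion, hs]

namespace IsTorsorAlgebra

/-- The Galois map of a torsor algebra, as an isomorphism of algebras over the left factor `B`. -/
noncomputable def galoisEquiv {k : Type u} [CommSemiring k] {A : Type v} [CommSemiring A]
    [HopfAlgebra k A] {B : Type w} [CommSemiring B] [Algebra k B] {ρ : B →ₐ[k] B ⊗[k] A}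
    (hρ : IsTorsorAlgebra k A B ρ) : B ⊗[k] B ≃ₐ[B] B ⊗[k] A :=
  AlgEquiv.ofBijective
    (Algebra.TensorProduct.lift Algebra.TensorProduct.includeLeft ρ fun _ _ ↦ Commute.all _ _)
    hρ.galois_bijective

variable {k : Type u} [CommRing k] {A : Type v} [CommRing A] [HopfAlgebra k A]
  {B : Type w} [CommRing B] [Algebra k B] {ρ : B →ₐ[k] B ⊗[k] A}

theorem finiteType [Module.FaithfullyFlat k B] [Algebra.FiniteType k A]
    (hρ : IsTorsorAlgebra k A B ρ) : Algebra.FiniteType k B :=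
  have : Algebra.FiniteType B (B ⊗[k] B) := .equiv inferInstance hρ.galoisEquiv.symm
  .of_finiteType_tensorProduct_of_faithfullyFlat B

theorem lift_rank_eq [Module.Free k A] [Module.Free k B] (hρ : IsTorsorAlgebra k A B ρ) :
    lift.{v} (Module.rank k B) = lift.{w} (Module.rank k A) := by
  have := hρ.nontrivial
  have : Nontrivial k := (algebraMap k B).domain_nontrivial
  calc lift.{v} (Module.rank k B)
    _ = lift.{max v w} (Module.rank B (B ⊗[k] B)) := by
      rw [Module.rank_baseChange, lift_id, ← lift_umax.{w, v}]
    _ = lift.{w} (Module.rank B (B ⊗[k] A)) := hρ.galoisEquiv.toLinearEquiv.lift_rank_eq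
    _ = lift.{w} (Module.rank k A) := by rw [Module.rank_baseChange, lift_lift]

end IsTorsorAlgebra

theorem torsor_trivial_of_small_card_general {k : Type u} [Field k] [IsAlgClosed k]
    {A : Type v} [CommRing A] [HopfAlgebra k A] {S : Set A} (hS : Algebra.adjoin k S = ⊤)
    (hcard : lift.{u} #S < lift.{v} #k) {B : Type w} [CommRing B] [Algebra k B]
    {ρ : B →ₐ[k] B ⊗[k] A} (hρ : IsTorsorAlgebra k A B ρ) : Nonempty (B →ₐ[k] k) := by
  have := hρ.nontrivial
  rcases S.finite_or_infinite with hfin | hinf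
  · have : Algebra.FiniteType k A := ⟨Subalgebra.fg_def.2 ⟨S, hfin, hS⟩⟩
    have : Algebra.FiniteType k B := hρ.finiteType
    exact nonempty_algHom_of_finiteType
  · have hrankA : Module.rank k A ≤ #S := by
      have : Infinite S := hinf.to_subtype
      exact (rank_le_max_of_adjoin_eq_top hS).trans_eq (max_eq_left (aleph0_le_mk S))
    apply nonempty_algHom_of_lift_rank_lt_lift_mk
    rw [← lift_lt.{_, v}, lift_lift, lift_lift]
    calc lift.{max u v} (Module.rank k B)
      _ = lift.{max u w} (Module.rank k A) := by
        simpa only [lift_lift] using congr_arg Cardinal.lift.{u} hρ.lift_rank_eq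
      _ ≤ lift.{max u w} #S := lift_le.2 hrankA
      _ < lift.{max w v} #k := by simpa only [lift_lift] using lift_lt.{_, w}.2 hcard

/-- Over an algebraically closed field `k`, if the commutative Hopf algebra `A` is the directed
union of finitely generated sub-Hopf-algebras indexed by a directed poset `I` of cardinality
strictly less than that of `k`, then every torsor algebra `B` for `A` admits a `k`-algebra
homomorphism `B → k` (i.e. the corresponding torsor is trivial). -/
theorem torsor_trivial_of_small_card {k : Type u} [Field k] [IsAlgClosed k]
    {A : Type u} [CommRing A] [HopfAlgebra k A]
    {I : Type u} [PartialOrder I] [Nonempty I] [IsDirected I (· ≤ ·)]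
    (hcard : Cardinal.mk I < Cardinal.mk k)
    (𝒜 : I → Subalgebra k A) (hmono : Monotone 𝒜)
    (hfg : ∀ i, (𝒜 i).FG) (hhopf : ∀ i, (𝒜 i).IsHopfSub k)
    (hunion : ∀ a : A, ∃ i, a ∈ 𝒜 i)
    {B : Type u} [CommRing B] [Algebra k B]
    (ρ : B →ₐ[k] B ⊗[k] A) (hρ : IsTorsorAlgebra k A B ρ) :
    Nonempty (B →ₐ[k] k) := by
  have htop : ⨆ i, 𝒜 i = ⊤ := eq_top_iff.2 fun a _ ↦ (hunion a).elim (le_iSup 𝒜 · ·)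
  obtain ⟨S, hS, hSk⟩ := exists_adjoin_eq_iSup_and_lift_mk_lt hfg
    (aleph0_le_mk k) (by rwa [lift_id])
  exact torsor_trivial_of_small_card_general (hS.trans htop) (by simpa using hSk) hρ
end

section
/- Let k be an algebraically closed field and let B be a nonzero commutative k-algebra. Suppose B is the union of a monotone family (B_ω)_{ω ∈ Ω} of nonzero finitely generated k-subalgebras indexed by an at most countable directed poset Ω, such that for all ω₁ ≤ ω₂ in Ω the inclusion B_{ω₁} ⊆ B_{ω₂} makes B_{ω₂} a faithfully flat B_{ω₁}-algebra. Then there exists a k-algebra homomorphism B → k. -/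
/-!
A point of `ℬ ω₁` with values in an algebraically closed field `K` extends to `ℬ ω₂` as soon as
`Spec (ℬ ω₂) → Spec (ℬ ω₁)` is surjective, for instance when `ℬ ω₂` is faithfully flat over
`ℬ ω₁`: the fibre over the point is then a nonzero `K`-algebra of finite type, and so has a
`K`-point by the Nullstellensatz. Thus the points of the `ℬ ω` form an inverse system with
surjective transition maps. Having a cofinal sequence, this system has a nonempty limit, and the
limit consists of the points of the union `B`.
-/

open Filter
open scoped TensorProduct

theorem nonempty_algHom_of_finiteType_s3 (k C K : Type*) [Field k] [CommRing C] [Algebra k C]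
    [Algebra.FiniteType k C] [Nontrivial C] [Field K] [IsAlgClosed K] [Algebra k K] :
    Nonempty (C →ₐ[k] K) := by
  obtain ⟨M, hM⟩ := Ideal.exists_maximal C
  let : Field (C ⧸ M) := Ideal.Quotient.field M
  have : Module.Finite k (C ⧸ M) := finite_of_finite_type_of_isJacobsonRing k (C ⧸ M)
  exact ⟨(IsAlgClosed.lift : (C ⧸ M) →ₐ[k] K).comp (Ideal.Quotient.mkₐ k M)⟩

theorem nontrivial_tensorProduct_of_liesOver {R A B : Type*} [CommRing R] [CommRing A]
    [CommRing B] [Algebra R A] [Algebra R B] (P : Ideal R) (p : Ideal A) (q : Ideal B)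
    [p.IsPrime] [q.IsPrime] [p.LiesOver P] [q.LiesOver P] : Nontrivial (A ⊗[R] B) := by
  have : Nontrivial ((A ⧸ p) ⊗[R ⧸ P] (B ⧸ q)) :=
    Algebra.TensorProduct.nontrivial_of_algebraMap_injective_of_isDomain _ _ _
      (FaithfulSMul.algebraMap_injective _ _) (FaithfulSMul.algebraMap_injective _ _)
  exact ((Algebra.TensorProduct.mapOfCompatibleSMul (R ⧸ P) R R (A ⧸ p) (B ⧸ q)).comp
    (Algebra.TensorProduct.map (Ideal.Quotient.mkₐ R p)
      (Ideal.Quotient.mkₐ R q))).toRingHom.domain_nontrivial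

theorem nonempty_algHom_of_liesOver_ker {A C K : Type*} [CommRing A] [CommRing C] [Field K]
    [IsAlgClosed K] [Algebra A C] [Algebra A K] [Algebra.FiniteType A C] (q : Ideal C) [q.IsPrime]
    [q.LiesOver (RingHom.ker (algebraMap A K))] : Nonempty (C →ₐ[A] K) := by
  have : (⊥ : Ideal K).LiesOver (RingHom.ker (algebraMap A K)) := ⟨rfl⟩
  have : Nontrivial (K ⊗[A] C) :=
    nontrivial_tensorProduct_of_liesOver (RingHom.ker (algebraMap A K)) ⊥ q
  obtain ⟨ψ⟩ := nonempty_algHom_of_finiteType_s3 K (K ⊗[A] C) K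
  exact ⟨(ψ.restrictScalars A).comp Algebra.TensorProduct.includeRight⟩

theorem surjective_algHom_comp_of_comap_surjective {R A C K : Type*} [CommRing R] [CommRing A]
    [CommRing C] [Field K] [IsAlgClosed K] [Algebra R A] [Algebra R C] [Algebra R K]
    {f : A →ₐ[R] C} (hft : f.FiniteType)
    (hf : Function.Surjective (PrimeSpectrum.comap f.toRingHom)) :
    Function.Surjective fun ψ : C →ₐ[R] K ↦ ψ.comp f := by
  intro φ
  algebraize [f.toRingHom, φ.toRingHom]
  have : Algebra.FiniteType A C := hft
  obtain ⟨q, hq⟩ := hf ⟨RingHom.ker (algebraMap A K), RingHom.ker_isPrime _⟩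
  have : q.asIdeal.LiesOver (RingHom.ker (algebraMap A K)) :=
    ⟨congrArg PrimeSpectrum.asIdeal hq.symm⟩
  obtain ⟨ψ⟩ := nonempty_algHom_of_liesOver_ker (A := A) (K := K) q.asIdeal
  exact ⟨ψ.restrictScalars R, AlgHom.ext ψ.commutes⟩

section DirectedUnion

theorem exists_forall_map_succ_eq {F : ℕ → Type*} {r : ∀ n, F (n + 1) → F n}
    (hr : ∀ n, Function.Surjective (r n)) (x₀ : F 0) :
    ∃ x : ∀ n, F n, x 0 = x₀ ∧ ∀ n, r n (x (n + 1)) = x n := by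
  choose lift r_lift using hr
  exact ⟨Nat.rec x₀ lift, rfl, fun n ↦ r_lift n _⟩

variable {R B T : Type*} [CommSemiring R] [Semiring B] [Algebra R B] [Semiring T] [Algebra R T]

theorem exists_algHom_forall_comp_val_eq {ι : Type*} [Preorder ι] [IsDirectedOrder ι]
    {S : ι → Subalgebra R B} (hS : Monotone S) (hunion : ∀ b, ∃ i, b ∈ S i)
    (φ : ∀ i, S i →ₐ[R] T)
    (hφ : ∀ i j (h : i ≤ j), (φ j).comp (Subalgebra.inclusion (hS h)) = φ i) :
    ∃ Φ : B →ₐ[R] T, ∀ i, Φ.comp (S i).val = φ i := by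
  have : Nonempty ι := (hunion 0).nonempty
  have hcompat : ∀ i j (h : S i ≤ S j), φ i = (φ j).comp (Subalgebra.inclusion h) := by
    intro i j h
    obtain ⟨l, hil, hjl⟩ := exists_ge_ge i j
    rw [← hφ i l hil, ← hφ j l hjl]
    rfl
  have htop : (⊤ : Subalgebra R B) ≤ ⨆ i, S i := fun b _ ↦
    let ⟨i, hi⟩ := hunion b
    le_iSup S i hi
  refine ⟨(Subalgebra.iSupLift S hS.directed_le φ hcompat ⊤ htop).comp
    (Subalgebra.topEquiv (R := R) (A := B)).symm.toAlgHom, fun i ↦ ?_⟩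
  exact Subalgebra.iSupLift_comp_inclusion (dir := hS.directed_le) (hf := hcompat) (hT := htop)
    (h := le_top)

theorem exists_algHom_comp_val_zero_eq {S : ℕ → Subalgebra R B} (hS : Monotone S)
    (hunion : ∀ b, ∃ n, b ∈ S n)
    (hext : ∀ n, Function.Surjective fun ψ : S (n + 1) →ₐ[R] T ↦
      ψ.comp (Subalgebra.inclusion (hS n.le_succ)))
    (φ₀ : S 0 →ₐ[R] T) : ∃ Φ : B →ₐ[R] T, Φ.comp (S 0).val = φ₀ := by
  obtain ⟨φ, rfl, hφ_succ⟩ := exists_forall_map_succ_eq hext φ₀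
  have hφ : ∀ m n (h : m ≤ n), (φ n).comp (Subalgebra.inclusion (hS h)) = φ m := by
    intro m n h
    induction n, h using Nat.le_induction with
    | base => rfl
    | succ n hmn ih => rw [← ih, ← hφ_succ n]; rfl
  obtain ⟨Φ, hΦ⟩ := exists_algHom_forall_comp_val_eq hS hunion φ hφ
  exact ⟨Φ, hΦ 0⟩

theorem surjective_algHom_comp_val {Ω : Type*} [Preorder Ω] [IsDirectedOrder Ω]
    [(atTop : Filter Ω).IsCountablyGenerated] {ℬ : Ω → Subalgebra R B} (hm : Monotone ℬ)
    (hunion : ∀ b, ∃ ω, b ∈ ℬ ω)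
    (hext : ∀ ω₁ ω₂ (h : ω₁ ≤ ω₂), Function.Surjective fun ψ : ℬ ω₂ →ₐ[R] T ↦
      ψ.comp (Subalgebra.inclusion (hm h)))
    (ω₀ : Ω) : Function.Surjective fun Φ : B →ₐ[R] T ↦ Φ.comp (ℬ ω₀).val := by
  intro φ₀
  have : Nonempty Ω := ⟨ω₀⟩
  obtain ⟨s, hs, hs_tendsto⟩ := exists_seq_monotone_tendsto_atTop_atTop Ω
  have hs_cofinal (ω : Ω) : ∀ᶠ n in atTop, ω ≤ s n :=
    hs_tendsto.eventually (eventually_ge_atTop ω)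
  obtain ⟨N, hN⟩ := (hs_cofinal ω₀).exists
  obtain ⟨φN, rfl⟩ := hext ω₀ (s N) hN φ₀
  have ht : Monotone fun n ↦ s (N + n) := fun _ _ h ↦ hs (Nat.add_le_add_left h N)
  have ht_union (b : B) : ∃ n, b ∈ ℬ (s (N + n)) := by
    obtain ⟨ω, hω⟩ := hunion b
    obtain ⟨n, hn⟩ := (hs_cofinal ω).exists
    exact ⟨n, hm (hn.trans (hs (Nat.le_add_left n N))) hω⟩
  obtain ⟨Φ, rfl⟩ := exists_algHom_comp_val_zero_eq (hm.comp ht) ht_union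
    (fun n ↦ hext _ _ (ht n.le_succ)) φN
  exact ⟨Φ, rfl⟩

end DirectedUnion

theorem exists_algHom_of_countable_directed_union_general {k K B Ω : Type*} [Field k] [Field K]
    [IsAlgClosed K] [Algebra k K] [CommRing B] [Algebra k B] [Nontrivial B] [Preorder Ω]
    [IsDirectedOrder Ω] [(atTop : Filter Ω).IsCountablyGenerated]
    (ℬ : Ω → Subalgebra k B) (hm : Monotone ℬ) (hfg : ∀ ω, (ℬ ω).FG)
    (hunion : ∀ b : B, ∃ ω, b ∈ ℬ ω)
    (hspec : ∀ ω₁ ω₂ (h : ω₁ ≤ ω₂),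
      Function.Surjective (PrimeSpectrum.comap (Subalgebra.inclusion (hm h)).toRingHom)) :
    Nonempty (B →ₐ[k] K) := by
  have hft (ω : Ω) : Algebra.FiniteType k (ℬ ω) := (ℬ ω).fg_iff_finiteType.mp (hfg ω)
  have hft_inclusion (ω₁ ω₂ : Ω) (h : ω₁ ≤ ω₂) : (Subalgebra.inclusion (hm h)).FiniteType :=
    .of_comp_finiteType (f := Algebra.ofId k (ℬ ω₁)) (RingHom.finiteType_algebraMap.mpr (hft ω₂))
  obtain ⟨ω₀, -⟩ := hunion 0
  obtain ⟨φ₀⟩ := nonempty_algHom_of_finiteType_s3 k (ℬ ω₀) K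
  obtain ⟨Φ, -⟩ := surjective_algHom_comp_val hm hunion (fun ω₁ ω₂ h ↦
    surjective_algHom_comp_of_comap_surjective (hft_inclusion ω₁ ω₂ h) (hspec ω₁ ω₂ h)) ω₀ φ₀
  exact ⟨Φ⟩

/-- Over an algebraically closed field `k`, a nonzero commutative `k`-algebra `B` which is the
union of a monotone family of nonzero finitely generated `k`-subalgebras, indexed by an at most
countable directed poset `Ω`, with all inclusions (for `ω₁ ≤ ω₂`) faithfully flat, admits a
`k`-algebra homomorphism `B → k`. -/
theorem exists_algHom_of_countable_directed_union {k : Type} [Field k] [IsAlgClosed k]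
    {B : Type} [CommRing B] [Algebra k B] [Nontrivial B]
    {Ω : Type} [PartialOrder Ω] [Nonempty Ω] [Countable Ω] [IsDirected Ω (· ≤ ·)]
    (ℬ : Ω → Subalgebra k B) (hm : Monotone ℬ)
    (hfg : ∀ ω, (ℬ ω).FG) (hnt : ∀ ω, Nontrivial (ℬ ω))
    (hunion : ∀ b : B, ∃ ω, b ∈ ℬ ω)
    (hff : ∀ ω₁ ω₂ : Ω, ∀ h : ω₁ ≤ ω₂,
      letI : Algebra (ℬ ω₁) (ℬ ω₂) := (Subalgebra.inclusion (hm h)).toRingHom.toAlgebra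
      Module.FaithfullyFlat (ℬ ω₁) (ℬ ω₂)) :
    Nonempty (B →ₐ[k] k) := by
  exact exists_algHom_of_countable_directed_union_general ℬ hm hfg hunion fun ω₁ ω₂ h ↦
    (RingHom.FaithfullyFlat.iff_flat_and_comap_surjective.mp (hff ω₁ ω₂ h)).2
end

section
/- Let k be a field, let R be a nonzero commutative k-algebra, and let B′ ⊆ B be an inclusion of commutative k-algebras. If the induced inclusion of R-algebras B′ ⊗_k R ⊆ B ⊗_k R makes B ⊗_k R a faithfully flat (B′ ⊗_k R)-algebra, then B is a faithfully flat B′-algebra. -/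
open TensorProduct

/-!
Base change along `k → R` makes `A ⊗[k] R` faithfully flat over `A`, so `B ⊗[k] R` is faithfully
flat over `A` by transitivity. The factor `R` is then cancelled: for every `A`-module `X`,
`X ⊗[A] (B ⊗[k] R) ≃ (X ⊗[A] B) ⊗[k] R`, and `- ⊗[k] R` preserves and reflects exactness.
-/

section TensorProduct

variable {k A M N : Type*} [CommRing k] [CommRing A] [Algebra k A]
  [AddCommGroup M] [Module k M] [Module A M] [IsScalarTower k A M] [AddCommGroup N] [Module k N]

lemma rTensor_tensorProduct_comp_assoc {X Y : Type*}
    [AddCommGroup X] [Module k X] [Module A X] [IsScalarTower k A X]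
    [AddCommGroup Y] [Module k Y] [Module A Y] [IsScalarTower k A Y] (f : X →ₗ[A] Y) :
    f.rTensor (M ⊗[k] N) ∘ₗ (AlgebraTensorModule.assoc k A A X M N).toLinearMap =
      (AlgebraTensorModule.assoc k A A Y M N).toLinearMap ∘ₗ
        AlgebraTensorModule.rTensor k N (f.rTensor M) := by
  ext
  simp

variable (k N)

lemma rTensor_tensorProduct_exact_iff [Module.FaithfullyFlat k N] {X Y Z : Type*}
    [AddCommGroup X] [Module A X] [AddCommGroup Y] [Module A Y] [AddCommGroup Z] [Module A Z]
    (f : X →ₗ[A] Y) (g : Y →ₗ[A] Z) :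
    Function.Exact (f.rTensor (M ⊗[k] N)) (g.rTensor (M ⊗[k] N)) ↔
      Function.Exact (f.rTensor M) (g.rTensor M) := by
  let := Module.compHom X (algebraMap k A)
  let := Module.compHom Y (algebraMap k A)
  let := Module.compHom Z (algebraMap k A)
  have : IsScalarTower k A X := .of_algebraMap_smul fun _ _ ↦ rfl
  have : IsScalarTower k A Y := .of_algebraMap_smul fun _ _ ↦ rfl
  have : IsScalarTower k A Z := .of_algebraMap_smul fun _ _ ↦ rfl
  calc
    Function.Exact (f.rTensor (M ⊗[k] N)) (g.rTensor (M ⊗[k] N))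
    _ ↔ Function.Exact (AlgebraTensorModule.rTensor k N (f.rTensor M))
          (AlgebraTensorModule.rTensor k N (g.rTensor M)) :=
      Function.Exact.iff_of_ladder_linearEquiv
        (rTensor_tensorProduct_comp_assoc f) (rTensor_tensorProduct_comp_assoc g)
    _ ↔ Function.Exact (f.rTensor M) (g.rTensor M) :=
      Module.FaithfullyFlat.rTensor_exact_iff_exact k N
        ((f.rTensor M).restrictScalars k) ((g.rTensor M).restrictScalars k)

theorem faithfullyFlat_of_tensorProduct [Module.FaithfullyFlat k N]
    [Module.FaithfullyFlat A (M ⊗[k] N)] : Module.FaithfullyFlat A M := by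
  rw [Module.FaithfullyFlat.iff_exact_iff_rTensor_exact]
  intro X _ _ Y _ _ Z _ _ f g
  rw [← rTensor_tensorProduct_exact_iff k N, Module.FaithfullyFlat.rTensor_exact_iff_exact]

end TensorProduct

theorem faithfullyFlat_of_tensor_faithfullyFlat_general
    {k R A B : Type*} [CommRing k] [CommRing R] [Algebra k R] [Module.FaithfullyFlat k R]
    [CommRing A] [Algebra k A] [CommRing B] [Algebra k B] (f : A →ₐ[k] B)
    (hf : (Algebra.TensorProduct.map f (AlgHom.id k R)).toRingHom.FaithfullyFlat) :
    f.toRingHom.FaithfullyFlat := by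
  algebraize [f.toRingHom, (Algebra.TensorProduct.map f (AlgHom.id k R)).toRingHom]
  have : IsScalarTower k A B := .of_algHom f
  have : IsScalarTower A (A ⊗[k] R) (B ⊗[k] R) := .of_algebraMap_eq fun a ↦
    (Algebra.TensorProduct.map_tmul f (AlgHom.id k R) a 1).symm
  have : Module.FaithfullyFlat A (B ⊗[k] R) := .trans A (A ⊗[k] R) (B ⊗[k] R)
  exact faithfullyFlat_of_tensorProduct k R

/-- Faithful flatness descends along the faithfully flat base change `- ⊗_k R` over a field `k`:
if `B′ ⊆ B` are commutative `k`-algebras, `R` is a nonzero commutative `k`-algebra, and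
`B ⊗_k R` is faithfully flat over `B′ ⊗_k R`, then `B` is faithfully flat over `B′`. -/
theorem faithfullyFlat_of_tensor_faithfullyFlat {k : Type} [Field k]
    {R : Type} [CommRing R] [Algebra k R] [Nontrivial R]
    {B : Type} [CommRing B] [Algebra k B] (B' : Subalgebra k B)
    (hff : letI alg : Algebra (B' ⊗[k] R) (B ⊗[k] R) :=
        (Algebra.TensorProduct.map B'.val (AlgHom.id k R)).toRingHom.toAlgebra
      letI : Module (B' ⊗[k] R) (B ⊗[k] R) := alg.toModule
      Module.FaithfullyFlat (B' ⊗[k] R) (B ⊗[k] R)) :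
    Module.FaithfullyFlat B' B := by
  exact RingHom.faithfullyFlat_algebraMap_iff.mp
    (faithfullyFlat_of_tensor_faithfullyFlat_general B'.val hff)
end
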